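/- arXiv:2402.02575 — 2 statements merged into one kernel-verified Lean document; each statement's English description precedes it below -/
import Mathlib

section
/- For every ε > 0 there exists a measurable map f : X → Fin 3 such that μ({x : ∃ s ∈ S, f(s • x) = f(x)}) < ε. (Upper-bound half of the computation of the approximate chromatic number of F_2: the Bernoulli shift of F_2 admits measurable 3-labellings that are proper except on a set of measure less than ε.) -/
open MeasureTheory

namespace F2Col

abbrev G := FreeGroup (Fin 2)
abbrev Col := G → Option (Fin 3)

noncomputable def S : Finset G := Finset.univ.image (fun a : Fin 2 × Bool => FreeGroup.mk [a])

lemma mem_S {s : G} : s ∈ S ↔ ∃ a : Fin 2 × Bool, s = FreeGroup.mk [a] := by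
  simp only [S, Finset.mem_image, Finset.mem_univ, true_and]
  exact ⟨fun ⟨a, h⟩ => ⟨a, h.symm⟩, fun ⟨a, h⟩ => ⟨a, h.symm⟩⟩

lemma card_S : S.card ≤ 4 := by
  refine Finset.card_image_le.trans ?_
  simp

lemma inv_mem_S {s : G} (h : s ∈ S) : s⁻¹ ∈ S := by
  obtain ⟨a, rfl⟩ := mem_S.1 h
  refine mem_S.2 ⟨(a.1, !a.2), ?_⟩
  simp [FreeGroup.inv_mk, FreeGroup.invRev]

def NB (u : ℕ → G) (L : ℕ) : Prop :=
  (∀ k < L, ∃ s ∈ S, u (k+1) = s * u k) ∧ (∀ k, k + 2 ≤ L → u (k+2) ≠ u k)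

lemma NB.word {u : ℕ → G} : ∀ {L : ℕ}, NB u L → ∃ l : List (Fin 2 × Bool),
    FreeGroup.IsReduced l ∧ l.length = L ∧ FreeGroup.mk l = u L * (u 0)⁻¹ ∧
    (∀ a l', l = a :: l' → u L = FreeGroup.mk [a] * u (L-1)) := by
  intro L
  induction L with
  | zero => intro _; exact ⟨[], by simp, by simp, by simp [← FreeGroup.one_eq_mk], by simp⟩
  | succ L ih =>
    intro h
    obtain ⟨l, h1, h2, h3, h4⟩ := ih ⟨fun k hk => h.1 k (by omega), fun k hk => h.2 k (by omega)⟩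
    obtain ⟨s, hs, hu⟩ := h.1 L (by omega)
    obtain ⟨a, rfl⟩ := mem_S.1 hs
    refine ⟨a :: l, ?_, by simp [h2], ?_, ?_⟩
    · cases l with
      | nil => simp
      | cons b l' =>
        rw [FreeGroup.isReduced_cons_cons]
        refine ⟨fun hab => ?_, h1⟩
        by_contra hne
        have hb := h4 b l' rfl
        have hL : 1 ≤ L := by simp at h2; omega
        apply h.2 (L-1) (by omega)
        have e1 : L - 1 + 2 = L + 1 := by omega
        rw [e1, hu, hb, ← mul_assoc]
        have : FreeGroup.mk [a] = (FreeGroup.mk [b])⁻¹ := by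
          simp only [FreeGroup.inv_mk, FreeGroup.invRev]
          congr 1
          obtain ⟨a1, a2⟩ := a
          obtain ⟨b1, b2⟩ := b
          simp at hab hne ⊢
          refine ⟨hab, ?_⟩
          revert hne; cases a2 <;> cases b2 <;> simp
        rw [this, inv_mul_cancel, one_mul]
    · rw [hu, mul_assoc, ← h3, FreeGroup.mul_mk]; rfl
    · intro a' l' e
      simp at e
      rw [← e.1]; simpa using hu

lemma NB.norm0 {u : ℕ → G} {L : ℕ} (h : NB u L) : (u L * (u 0)⁻¹).norm = L := by
  obtain ⟨l, h1, h2, h3, -⟩ := h.word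
  rw [← h3, FreeGroup.norm, FreeGroup.toWord_mk, h1.reduce_eq, h2]

lemma NB.norm {u : ℕ → G} {L : ℕ} (h : NB u L) {i j : ℕ} (hij : i ≤ j) (hj : j ≤ L) :
    (u j * (u i)⁻¹).norm = j - i := by
  have : NB (fun k => u (i + k)) (j - i) :=
    ⟨fun k hk => h.1 (i+k) (by omega), fun k hk => h.2 (i+k) (by omega)⟩
  have := this.norm0
  simpa [Nat.add_sub_cancel' hij] using this

lemma NB.inj {u : ℕ → G} {L : ℕ} (h : NB u L) {i j : ℕ} (hi : i ≤ L) (hj : j ≤ L)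
    (e : u i = u j) : i = j := by
  rcases le_total i j with hij | hij
  · have := h.norm hij hj; rw [e] at this; simp at this; omega
  · have := h.norm hij hi; rw [e] at this; simp at this; omega

lemma norm_S {s : G} (h : s ∈ S) : s.norm ≤ 1 := by
  obtain ⟨a, rfl⟩ := mem_S.1 h
  exact FreeGroup.norm_mk_le

lemma NB.chord {u : ℕ → G} {L : ℕ} (h : NB u L) {i j : ℕ} (hi : i ≤ L) (hj : j ≤ L)
    {s : G} (hs : s ∈ S) (e : u j = s * u i) (hne : i ≠ j) : j = i + 1 ∨ i = j + 1 := by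
  have := norm_S hs
  rcases le_total i j with hij | hij
  · have := h.norm hij hj; rw [e] at this; simp at this; omega
  · have := h.norm hij hi; rw [← FreeGroup.norm_inv_eq, e] at this; simp at this; omega

lemma S_ne_one {s : G} (h : s ∈ S) : s ≠ 1 := by
  obtain ⟨a, rfl⟩ := mem_S.1 h
  intro e
  have := congrArg FreeGroup.toWord e
  simp at this

noncomputable def ball : ℕ → Finset G
  | 0 => {1}
  | n+1 => ball n ∪ (S ×ˢ ball n).image (fun p => p.1 * p.2)

lemma ball_succ {n : ℕ} {g s : G} (h : g ∈ ball n) (hs : s ∈ S) : s * g ∈ ball (n+1) := by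
  simp only [ball, Finset.mem_union, Finset.mem_image, Finset.mem_product, Prod.exists]
  exact Or.inr ⟨s, g, ⟨hs, h⟩, rfl⟩

lemma ball_mono : Monotone ball := monotone_nat_of_le_succ fun n => by
  simp only [ball]; exact Finset.subset_union_left

def Proper (F : Col) : Prop := ∀ γ, ∀ s ∈ S, F γ ≠ none → F (s * γ) ≠ F γ

def Impr (B A : Finset G) (F : Col) : Prop := ∃ g : Col,
  (∀ γ ∈ B, ∀ s ∈ S, g γ ≠ none → g (s * γ) ≠ g γ) ∧ (∀ γ ∈ A, γ ∉ B → g γ = F γ) ∧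
  (B.filter (fun γ => g γ = none)).card < (B.filter (fun γ => F γ = none)).card

lemma recolor {F : Col} (hF : Proper F) {u : ℕ → G} {L : ℕ} (h : NB u L)
    (col : ℕ → Option (Fin 3))
    (ha : ∀ t < L, col t ≠ none → col (t+1) ≠ col t)
    (hb : ∀ t ≤ L, ∀ s ∈ S, col t ≠ none → F (s * u t) = col t → ∃ r ≤ L, s * u t = u r) :
    ∃ g : Col, Proper g ∧ (∀ t ≤ L, g (u t) = col t) ∧
      (∀ γ, (∀ t ≤ L, u t ≠ γ) → g γ = F γ) := by
  classical
  let g : Col := fun γ => if h : ∃ t ≤ L, u t = γ then col h.choose else F γ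
  have g1 : ∀ t ≤ L, g (u t) = col t := by
    intro t ht
    have hex : ∃ r ≤ L, u r = u t := ⟨t, ht, rfl⟩
    simp only [g, dif_pos hex]
    rw [h.inj hex.choose_spec.1 ht hex.choose_spec.2]
  have g2 : ∀ γ, (∀ t ≤ L, u t ≠ γ) → g γ = F γ := by
    intro γ hγ
    simp only [g]
    rw [dif_neg]; push Not; exact hγ
  refine ⟨g, ?_, g1, g2⟩
  intro γ s hs hne e
  by_cases h1 : ∃ t ≤ L, u t = γ
  · obtain ⟨t, ht, rfl⟩ := h1
    by_cases h2 : ∃ r ≤ L, u r = s * u t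
    · obtain ⟨r, hr, e2⟩ := h2
      rw [← e2, g1 r hr, g1 t ht] at e
      rw [g1 t ht] at hne
      have htr : t ≠ r := by
        rintro rfl
        exact S_ne_one hs (by simpa using e2.symm)
      rcases h.chord ht hr hs e2 htr with rfl | rfl
      · exact ha t (by omega) hne e
      · exact ha r (by omega) (by rwa [e]) e.symm
    · have h2' : ∀ r ≤ L, u r ≠ s * u t := by push Not at h2; exact h2
      rw [g2 _ h2', g1 t ht] at e
      rw [g1 t ht] at hne
      obtain ⟨r, hr, e3⟩ := hb t ht s hs hne e
      exact h2' r hr e3.symm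
  · have h1' : ∀ r ≤ L, u r ≠ γ := by push Not at h1; exact h1
    by_cases h2 : ∃ r ≤ L, u r = s * γ
    · obtain ⟨r, hr, e2⟩ := h2
      rw [← e2, g1 r hr] at e
      rw [g2 _ h1'] at e hne
      have e4 : s⁻¹ * u r = γ := by rw [e2]; simp
      obtain ⟨q, hq, e3⟩ := hb r hr s⁻¹ (inv_mem_S hs) (by rwa [e]) (by rw [e4, e])
      exact h1' q hq (by rw [← e3, e4])
    · have h2' : ∀ r ≤ L, u r ≠ s * γ := by push Not at h2; exact h2
      rw [g2 _ h2', g2 _ h1'] at e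
      rw [g2 _ h1'] at hne
      exact hF γ s hs hne e

structure Walk (F : Col) (u : ℕ → G) (n : ℕ) : Prop where
  h0 : F (u 0) = none
  nb : NB u n
  col : ∀ k < n, F (u (k+1)) ≠ none
  uniq : ∀ k < n, ∀ s ∈ S, F (s * u k) = F (u (k+1)) →
    s * u k = u (k+1) ∨ ∃ j, j + 1 = k ∧ s * u k = u j

lemma Walk.trunc {F : Col} {u : ℕ → G} {n m : ℕ} (h : Walk F u n) (hm : m ≤ n) : Walk F u m :=
  ⟨h.h0, ⟨fun k hk => h.nb.1 k (by omega), fun k hk => h.nb.2 k (by omega)⟩,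
    fun k hk => h.col k (by omega), fun k hk => h.uniq k (by omega)⟩

lemma Walk.free {F : Col} (hF : Proper F) {u : ℕ → G} {n : ℕ} (h : Walk F u n) {B A : Finset G}
    (hB : ∀ k ≤ n, u k ∈ B) (c : Fin 3) (hc : F (u n) ≠ some c)
    (hc' : ∀ s ∈ S, F (s * u n) = some c → ∃ j, j + 1 = n ∧ s * u n = u j) : Impr B A F := by
  obtain ⟨g, g0, g1, g2⟩ := recolor hF h.nb (fun t => if t < n then F (u (t+1)) else some c)
    (by
      intro t ht hne
      simp only [ht, if_true] at hne ⊢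
      by_cases h1 : t + 1 < n
      · simp only [h1, if_true]
        obtain ⟨s, hs, e⟩ := h.nb.1 (t+1) h1
        rw [e]; exact hF _ s hs hne
      · have : t + 1 = n := by omega
        subst this
        simp only [lt_irrefl, if_false]
        exact hc.symm)
    (by
      intro t ht s hs hne e
      by_cases h1 : t < n
      · simp only [h1, if_true] at e
        rcases h.uniq t h1 s hs e with e | ⟨j, hj, e⟩
        · exact ⟨t+1, h1, e⟩
        · exact ⟨j, by omega, e⟩
      · have : t = n := by omega
        subst this
        simp only [h1, if_false] at e
        obtain ⟨j, hj, e⟩ := hc' s hs e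
        exact ⟨j, by omega, e⟩)
  refine ⟨g, fun γ _ => g0 γ, fun γ _ hγ => g2 γ fun t ht e => hγ (e ▸ hB t ht), ?_⟩
  have hcn : ∀ t ≤ n, g (u t) ≠ none := by
    intro t ht
    rw [g1 t ht]
    by_cases h1 : t < n
    · simp only [h1, if_true]; exact h.col t h1
    · simp [h1]
  apply Finset.card_lt_card
  rw [Finset.ssubset_iff_of_subset]
  · refine ⟨u 0, ?_, ?_⟩
    · simp [hB 0 (by omega), h.h0]
    · simp [hcn 0 (by omega)]
  · intro γ hγ
    simp only [Finset.mem_filter] at hγ ⊢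
    refine ⟨hγ.1, ?_⟩
    rw [← g2 γ, hγ.2]
    rintro t ht rfl
    exact hcn t ht hγ.2

lemma meet {F : Col} (hF : Proper F) {v w : ℕ → G} {i j : ℕ} (hv : Walk F v i) (hw : Walk F w j)
    (e : v i = w j) (hd : ∀ l < j, ∀ a ≤ i, w l ≠ v a) (hne : v 0 ≠ w 0)
    {B A : Finset G} (hBv : ∀ k ≤ i, v k ∈ B) (hBw : ∀ k ≤ j, w k ∈ B) : Impr B A F := by
  have hi : 1 ≤ i := by
    by_contra hi
    have : i = 0 := by omega
    subst this
    rcases Nat.eq_zero_or_pos j with rfl | hj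
    · exact hne e
    · apply hw.col (j-1) (by omega)
      rw [Nat.sub_add_cancel hj, ← e, hv.h0]
  have hj : 1 ≤ j := by
    by_contra hj
    have : j = 0 := by omega
    subst this
    apply hv.col (i-1) (by omega)
    rw [Nat.sub_add_cancel hi, e, hw.h0]
  set u : ℕ → G := fun t => if t ≤ j then w t else v (i + j - t) with hu
  have u1 : ∀ t ≤ j, u t = w t := fun t ht => by simp [hu, ht]
  have u2 : ∀ t, j ≤ t → u t = v (i + j - t) := fun t ht => by
    rcases ht.eq_or_lt with rfl | ht
    · simp [hu, e]
    · simp [hu, ht]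
  have nb : NB u (i + j) := by
    constructor
    · intro k hk
      by_cases h1 : k < j
      · rw [u1 k h1.le, u1 (k+1) h1]; exact hw.nb.1 k h1
      · rw [u2 k (by omega), u2 (k+1) (by omega)]
        obtain ⟨s, hs, e⟩ := hv.nb.1 (i + j - (k+1)) (by omega)
        have : i + j - (k+1) + 1 = i + j - k := by omega
        rw [this] at e
        exact ⟨s⁻¹, inv_mem_S hs, by rw [e]; simp⟩
    · intro k hk
      by_cases h1 : k + 2 ≤ j
      · rw [u1 k (by omega), u1 (k+2) h1]; exact hw.nb.2 k h1
      · by_cases h2 : k < j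
        · rw [u1 k (by omega), u2 (k+2) (by omega)]
          exact (hd k h2 _ (by omega)).symm
        · rw [u2 k (by omega), u2 (k+2) (by omega)]
          have := hv.nb.2 (i + j - (k+2)) (by omega)
          have e2 : i + j - (k+2) + 2 = i + j - k := by omega
          rw [e2] at this
          exact this.symm
  have adjF : ∀ {x : ℕ → G} {n : ℕ}, Walk F x n → ∀ k < n, F (x k) ≠ F (x (k+1)) := by
    intro x n hx k hk e
    obtain ⟨s, hs, e'⟩ := hx.nb.1 k hk
    have h2 := hx.col k hk
    rw [← e] at h2
    exact hF _ s hs h2 (by rw [← e', e])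
  obtain ⟨g, g0, g1, g2⟩ := recolor hF nb
    (fun t => if t < j then F (w (t+1)) else if t = j then none else F (v (i + j - t + 1)))
    (by
      intro t ht hne
      rcases lt_trichotomy t j with h1 | h1 | h1
      · by_cases h2 : t + 1 < j
        · simp only [h1, h2, if_true]
          exact (adjF hw (t+1) h2).symm
        · have h3 : t + 1 = j := by omega
          simp only [h1, if_true] at hne ⊢
          simp only [h3, lt_irrefl, if_true, if_false]
          rw [h3] at hne
          exact hne.symm
      · simp [h1] at hne
      · have e1 : ¬ t < j := by omega
        have e2 : ¬ t = j := by omega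
        have e3 : ¬ t + 1 < j := by omega
        have e4 : ¬ t + 1 = j := by omega
        simp only [e1, e2, e3, e4, if_false]
        have := adjF hv (i + j - (t+1) + 1) (by omega)
        have e5 : i + j - (t+1) + 1 = i + j - t := by omega
        rw [e5] at this ⊢
        exact this)
    (by
      intro t ht s hs hne e
      rcases lt_trichotomy t j with h1 | h1 | h1
      · simp only [h1, if_true] at e
        rw [u1 t h1.le] at e ⊢
        rcases hw.uniq t h1 s hs e with e | ⟨l, hl, e⟩
        · exact ⟨t+1, by omega, by rw [e, u1 _ (by omega)]⟩
        · exact ⟨l, by omega, by rw [e, u1 _ (by omega)]⟩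
      · simp [h1] at hne
      · have e1 : ¬ t < j := by omega
        have e2 : ¬ t = j := by omega
        simp only [e1, e2, if_false] at e
        rw [u2 t h1.le] at e ⊢
        rcases hv.uniq (i + j - t) (by omega) s hs e with e | ⟨l, hl, e⟩
        · refine ⟨t-1, by omega, ?_⟩
          rw [e, u2 _ (by omega)]; congr 1; omega
        · refine ⟨t+1, by omega, ?_⟩
          rw [e, u2 _ (by omega)]; congr 1; omega)
  have huB : ∀ t ≤ i + j, u t ∈ B := by
    intro t ht
    by_cases h1 : t ≤ j
    · rw [u1 t h1]; exact hBw t h1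
    · rw [u2 t (by omega)]; exact hBv _ (by omega)
  refine ⟨g, fun γ _ => g0 γ, fun γ _ hγ => g2 γ fun t ht e => hγ (e ▸ huB t ht), ?_⟩
  set HF := B.filter (fun γ => F γ = none) with hHF
  have m0 : w 0 ∈ HF := by simp [hHF, hBw 0 (by omega), hw.h0]
  have m1 : v 0 ∈ HF.erase (w 0) := by simp [hHF, hBv 0 (by omega), hv.h0, hne]
  have hsub : B.filter (fun γ => g γ = none) ⊆ insert (u j) ((HF.erase (w 0)).erase (v 0)) := by
    intro γ hγ
    simp only [Finset.mem_filter] at hγ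
    rw [Finset.mem_insert]
    by_cases hp : ∃ t ≤ i + j, u t = γ
    · left
      obtain ⟨t, ht, rfl⟩ := hp
      have h3 := hγ.2
      rw [g1 t ht] at h3
      rcases lt_trichotomy t j with h1 | h1 | h1
      · simp only [h1, if_true] at h3
        exact absurd h3 (hw.col t h1)
      · rw [h1]
      · have e1 : ¬ t < j := by omega
        have e2 : ¬ t = j := by omega
        simp only [e1, e2, if_false] at h3
        exact absurd h3 (hv.col _ (by omega))
    · right
      push Not at hp
      rw [Finset.mem_erase, Finset.mem_erase, hHF, Finset.mem_filter]
      refine ⟨?_, ?_, hγ.1, by rw [← g2 γ hp, hγ.2]⟩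
      · rintro rfl; exact hp (i+j) le_rfl (by rw [u2 _ (by omega)]; simp)
      · rintro rfl; exact hp 0 (by omega) (u1 0 (by omega))
  have c1 := Finset.card_le_card hsub
  have c2 := Finset.card_insert_le (u j) ((HF.erase (w 0)).erase (v 0))
  have c3 := Finset.card_erase_of_mem m0
  have c4 := Finset.card_erase_of_mem m1
  have c5 : 0 < (HF.erase (w 0)).card := Finset.card_pos.2 ⟨_, m1⟩
  omega

lemma meet' {F : Col} (hF : Proper F) {v w : ℕ → G} {i j : ℕ} (hv : Walk F v i) (hw : Walk F w j)
    (e : v i = w j) (hne : v 0 ≠ w 0)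
    {B A : Finset G} (hBv : ∀ k ≤ i, v k ∈ B) (hBw : ∀ k ≤ j, w k ∈ B) : Impr B A F := by
  classical
  have hex : ∃ l, l ≤ j ∧ ∃ a ≤ i, v a = w l := ⟨j, le_rfl, i, le_rfl, e⟩
  obtain ⟨h1, a, h2, h3⟩ := Nat.find_spec hex
  refine meet hF (hv.trunc h2) (hw.trunc h1) h3 ?_ hne (fun k hk => hBv k (by omega))
    (fun k hk => hBw k (by omega))
  intro l hl b hb e
  exact Nat.find_min hex hl ⟨by omega, b, by omega, e.symm⟩

lemma pigeon (T : Finset G) (C : Finset (Fin 3)) (F : Col) (h : T.card < 2 * C.card) :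
    ∃ c ∈ C, (T.filter (fun z => F z = some c)).card ≤ 1 := by
  classical
  by_contra hcon
  push Not at hcon
  have h1 : ∑ c ∈ C, 2 ≤ ∑ c ∈ C, (T.filter (fun z => F z = some c)).card :=
    Finset.sum_le_sum fun c hc => hcon c hc
  rw [← Finset.card_biUnion] at h1
  · have : (C.biUnion fun c => T.filter (fun z => F z = some c)).card ≤ T.card :=
      Finset.card_le_card (Finset.biUnion_subset.2 fun c _ => Finset.filter_subset _ _)
    simp at h1; omega
  · intro a _ b _ hab
    rw [Function.onFun, Finset.disjoint_left]
    intro z hz hz'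
    simp only [Finset.mem_filter] at hz hz'
    exact hab (Option.some_injective _ (hz.2.symm.trans hz'.2))

lemma Walk.extend {F : Col} (hF : Proper F) {u : ℕ → G} {n : ℕ} (h : Walk F u n)
    {B A : Finset G} (hB : ∀ k ≤ n, u k ∈ B) (hI : ¬ Impr B A F) :
    ∃ u', u' 0 = u 0 ∧ Walk F u' (n+1) := by
  classical
  -- choose a color
  have key : ∃ c : Fin 3, F (u n) ≠ some c ∧ ∀ z z' : G, (∃ s ∈ S, z = s * u n) →
      (∃ s ∈ S, z' = s * u n) → (∀ j, j + 1 = n → z ≠ u j) → (∀ j, j + 1 = n → z' ≠ u j) →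
      F z = some c → F z' = some c → z = z' := by
    have hc : (S.image (fun s => s * u n)).card ≤ 4 := Finset.card_image_le.trans card_S
    rcases Nat.eq_zero_or_pos n with rfl | hn
    · obtain ⟨c, -, hcc⟩ := pigeon (S.image (fun s => s * u 0)) Finset.univ F (by simp at hc ⊢; omega)
      refine ⟨c, by simp [h.h0], ?_⟩
      rintro z z' ⟨s, hs, rfl⟩ ⟨s', hs', rfl⟩ - - e1 e2
      refine Finset.card_le_one.1 hcc _ ?_ _ ?_
      · simp only [Finset.mem_filter, Finset.mem_image]; exact ⟨⟨s, hs, rfl⟩, e1⟩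
      · simp only [Finset.mem_filter, Finset.mem_image]; exact ⟨⟨s', hs', rfl⟩, e2⟩
    · obtain ⟨m, rfl⟩ : ∃ m, n = m + 1 := ⟨n-1, by omega⟩
      obtain ⟨c0, hc0⟩ := Option.ne_none_iff_exists'.1 (h.col m (by omega))
      have hmem : u m ∈ S.image (fun s => s * u (m+1)) := by
        obtain ⟨s, hs, e⟩ := h.nb.1 m (by omega)
        simp only [Finset.mem_image]
        exact ⟨s⁻¹, inv_mem_S hs, by rw [e]; simp⟩
      have hc1 := Finset.card_erase_of_mem hmem
      have hc2 : ((Finset.univ : Finset (Fin 3)).erase c0).card = 2 := by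
        rw [Finset.card_erase_of_mem (Finset.mem_univ _)]; simp
      obtain ⟨c, hcm, hcc⟩ := pigeon ((S.image (fun s => s * u (m+1))).erase (u m))
        (Finset.univ.erase c0) F (by omega)
      refine ⟨c, ?_, ?_⟩
      · rw [hc0]; intro e; simp at e hcm; exact hcm e.symm
      rintro z z' ⟨s, hs, rfl⟩ ⟨s', hs', rfl⟩ n1 n2 e1 e2
      refine Finset.card_le_one.1 hcc _ ?_ _ ?_
      · simp only [Finset.mem_filter, Finset.mem_image, Finset.mem_erase]
        exact ⟨⟨n1 m rfl, s, hs, rfl⟩, e1⟩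
      · simp only [Finset.mem_filter, Finset.mem_image, Finset.mem_erase]
        exact ⟨⟨n2 m rfl, s', hs', rfl⟩, e2⟩
  obtain ⟨c, hc, hu⟩ := key
  by_cases hex : ∃ s ∈ S, F (s * u n) = some c ∧ ∀ j, j + 1 = n → s * u n ≠ u j
  · obtain ⟨s, hs, hsc, hsj⟩ := hex
    set u' : ℕ → G := fun k => if k ≤ n then u k else s * u n with hu'
    have e1 : ∀ k ≤ n, u' k = u k := fun k hk => by simp [hu', hk]
    have e2 : u' (n+1) = s * u n := by simp [hu']
    refine ⟨u', e1 0 (by omega), ⟨by rw [e1 0 (by omega)]; exact h.h0, ⟨?_, ?_⟩, ?_, ?_⟩⟩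
    · intro k hk
      by_cases hkn : k < n
      · rw [e1 k hkn.le, e1 (k+1) hkn]; exact h.nb.1 k hkn
      · have : k = n := by omega
        subst this
        rw [e2, e1 k le_rfl]; exact ⟨s, hs, rfl⟩
    · intro k hk
      by_cases hkn : k + 2 ≤ n
      · rw [e1 k (by omega), e1 (k+2) hkn]; exact h.nb.2 k hkn
      · have : k + 2 = n + 1 := by omega
        rw [this, e2, e1 k (by omega)]; exact hsj k (by omega)
    · intro k hk
      by_cases hkn : k < n
      · rw [e1 (k+1) hkn]; exact h.col k hkn
      · have : k = n := by omega
        subst this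
        rw [e2, hsc]; simp
    · intro k hk s' hs' hh
      by_cases hkn : k < n
      · rw [e1 k hkn.le, e1 (k+1) hkn] at hh ⊢
        rcases h.uniq k hkn s' hs' hh with h1 | ⟨j, hj, h1⟩
        · exact Or.inl h1
        · exact Or.inr ⟨j, hj, by rw [h1, e1 j (by omega)]⟩
      · have : k = n := by omega
        subst this
        rw [e2, e1 k le_rfl] at hh ⊢
        by_cases hj : ∃ j, j + 1 = k ∧ s' * u k = u j
        · obtain ⟨j, hj, h1⟩ := hj
          exact Or.inr ⟨j, hj, by rw [h1, e1 j (by omega)]⟩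
        · push Not at hj
          exact Or.inl (hu _ _ ⟨s', hs', rfl⟩ ⟨s, hs, rfl⟩ hj hsj (hh.trans hsc) hsc)
  · push Not at hex
    exact absurd (h.free hF hB c hc hex) hI

lemma NB.ball_fwd {u : ℕ → G} {L : ℕ} (h : NB u L) (h0 : u 0 = 1) : ∀ k ≤ L, u k ∈ ball k := by
  intro k
  induction k with
  | zero => intro _; simp [h0, ball]
  | succ k ih =>
    intro hk
    obtain ⟨s, hs, e⟩ := h.1 k hk
    rw [e]; exact ball_succ (ih (by omega)) hs

lemma NB.ball_bwd {u : ℕ → G} {L : ℕ} (h : NB u L) (h0 : u L = 1) :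
    ∀ k ≤ L, u (L - k) ∈ ball k := by
  intro k
  induction k with
  | zero => intro _; simp [h0, ball]
  | succ k ih =>
    intro hk
    obtain ⟨s, hs, e⟩ := h.1 (L - (k+1)) (by omega)
    have e2 : L - (k+1) + 1 = L - k := by omega
    rw [e2] at e
    have : u (L - (k+1)) = s⁻¹ * u (L - k) := by rw [e]; simp
    rw [this]; exact ball_succ (ih (by omega)) (inv_mem_S hs)

lemma exists_walk {F : Col} (hF : Proper F) (h1 : F 1 = none) {n : ℕ} {A : Finset G}
    (hI : ¬ Impr (ball n) A F) : ∃ u, u 0 = 1 ∧ Walk F u n := by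
  suffices ∀ m ≤ n, ∃ u, u 0 = 1 ∧ Walk F u m from this n le_rfl
  intro m
  induction m with
  | zero =>
    intro _
    exact ⟨fun _ => 1, rfl, ⟨h1, ⟨by simp, by simp⟩, by simp, by simp⟩⟩
  | succ m ih =>
    intro hm
    obtain ⟨u, hu, hw⟩ := ih (by omega)
    obtain ⟨u', e, hw'⟩ := hw.extend hF (B := ball n)
      (fun k hk => ball_mono (by omega) (hw.nb.ball_fwd hu k hk)) hI
    exact ⟨u', e.trans hu, hw'⟩

def Reach (F : Col) (n : ℕ) (h v : G) : Prop := ∃ u k, k ≤ n ∧ Walk F u k ∧ u 0 = h ∧ u k = v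

lemma reach_unique {F : Col} (hF : Proper F) {n : ℕ} {A : Finset G}
    (hI : ¬ Impr (ball n) A F) {h h' : G} (r : Reach F n h 1) (r' : Reach F n h' 1) : h = h' := by
  by_contra hne
  obtain ⟨u, k, hk, w, rfl, e⟩ := r
  obtain ⟨u', k', hk', w', rfl, e'⟩ := r'
  refine hI (meet' hF w w' (e.trans e'.symm) hne ?_ ?_)
  · intro j hj
    have := w.nb.ball_bwd e (k - j) (by omega)
    rw [Nat.sub_sub_self hj] at this
    exact ball_mono (by omega) this
  · intro j hj
    have := w'.nb.ball_bwd e' (k' - j) (by omega)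
    rw [Nat.sub_sub_self hj] at this
    exact ball_mono (by omega) this

lemma reach_many {F : Col} (hF : Proper F) (h1 : F 1 = none) {n : ℕ} {A : Finset G}
    (hI : ¬ Impr (ball n) A F) :
    ∃ T ⊆ ball n, n + 1 ≤ T.card ∧ ∀ γ ∈ T, Reach F n 1 γ := by
  classical
  obtain ⟨u, hu, hw⟩ := exists_walk hF h1 hI
  refine ⟨(Finset.range (n+1)).image u, ?_, ?_, ?_⟩
  · intro γ hγ
    obtain ⟨k, hk, rfl⟩ := Finset.mem_image.1 hγ
    have : k ≤ n := by simp at hk; omega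
    exact ball_mono this (hw.nb.ball_fwd hu k this)
  · rw [Finset.card_image_of_injOn]
    · simp
    · intro a ha b hb e
      simp at ha hb
      exact hw.nb.inj (by omega) (by omega) e
  · intro γ hγ
    obtain ⟨k, hk, rfl⟩ := Finset.mem_image.1 hγ
    have : k ≤ n := by simp at hk; omega
    exact ⟨u, k, this, hw.trunc this, hu, rfl⟩

lemma reach_translate {F : Col} {n : ℕ} {h v : G} (r : Reach F n h v) (g : G) :
    Reach (fun δ => F (δ * g)) n (h * g⁻¹) (v * g⁻¹) := by
  obtain ⟨u, k, hk, w, rfl, rfl⟩ := r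
  refine ⟨fun i => u i * g⁻¹, k, hk, ⟨by simpa using w.h0, ⟨?_, ?_⟩, ?_, ?_⟩, rfl, rfl⟩
  · intro i hi
    obtain ⟨s, hs, e⟩ := w.nb.1 i hi
    exact ⟨s, hs, by simp [e, mul_assoc]⟩
  · intro i hi; simpa using w.nb.2 i hi
  · intro i hi; simpa using w.col i hi
  · intro i hi s hs e
    simp only [← mul_assoc, inv_mul_cancel_right] at e ⊢
    rcases w.uniq i hi s hs e with e | ⟨j, hj, e⟩
    · left; rw [e]
    · right; exact ⟨j, hj, by rw [e]⟩

lemma reach_local {F F' : Col} {n : ℕ} {v : G} (hFF : ∀ γ ∈ ball (n+1), F γ = F' γ)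
    (r : Reach F n 1 v) : Reach F' n 1 v := by
  obtain ⟨u, k, hk, w, h0, rfl⟩ := r
  have hb : ∀ i ≤ k, F (u i) = F' (u i) := fun i hi =>
    hFF _ (ball_mono (by omega) (w.nb.ball_fwd h0 i hi))
  refine ⟨u, k, hk, ⟨?_, w.nb, ?_, ?_⟩, h0, rfl⟩
  · rw [← hb 0 (by omega)]; exact w.h0
  · intro i hi; rw [← hb (i+1) hi]; exact w.col i hi
  · intro i hi s hs e
    rw [← hb (i+1) hi, ← hFF _ (ball_mono (show i + 1 ≤ n + 1 by omega)
      (ball_succ (w.nb.ball_fwd h0 i hi.le) hs))] at e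
    exact w.uniq i hi s hs e


lemma impr_local {B A : Finset G} (hBA : B ⊆ A) {F F' : Col} (h : ∀ γ ∈ A, F γ = F' γ)
    (hI : Impr B A F) : Impr B A F' := by
  obtain ⟨g, h1, h2, h3⟩ := hI
  refine ⟨g, h1, fun γ hγ hn => by rw [h2 γ hγ hn, h γ hγ], ?_⟩
  have e : B.filter (fun γ => F γ = none) = B.filter (fun γ => F' γ = none) :=
    Finset.filter_congr (fun γ hγ => by rw [h γ (hBA hγ)])
  rwa [e] at h3

instance instMeasOpt : MeasurableSpace (Option (Fin 3)) := ⊤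

instance instDiscOpt : DiscreteMeasurableSpace (Option (Fin 3)) := ⟨fun _ => trivial⟩

section meas
variable {X : Type*} [MeasurableSpace X] [MulAction G X]

structure Good (f : X → Option (Fin 3)) : Prop where
  meas : Measurable f
  prop : ∀ x, ∀ s ∈ S, f x ≠ none → f (s • x) ≠ f x

def orb (f : X → Option (Fin 3)) (x : X) : Col := fun γ => f (γ • x)

lemma Good.proper {f : X → Option (Fin 3)} (h : Good f) (x : X) : Proper (orb f x) := by
  intro γ s hs hne
  have := h.prop (γ • x) s hs hne
  simpa [orb, mul_smul] using this

lemma measurable_local {f : X → Option (Fin 3)} (h : Measurable f)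
    (hm : ∀ γ : G, Measurable (fun x : X => γ • x))
    (A : Finset G) (P : Col → Prop) (hP : ∀ F F' : Col, (∀ γ ∈ A, F γ = F' γ) → P F → P F') :
    MeasurableSet {x | P (orb f x)} := by
  have h1 : Measurable (fun (x : X) (γ : A) => f ((γ : G) • x)) :=
    measurable_pi_lambda _ fun γ => h.comp (hm γ)
  have : {x | P (orb f x)} = (fun (x : X) (γ : A) => f ((γ : G) • x)) ⁻¹'
      ((fun (x : X) (γ : A) => f ((γ : G) • x)) '' {x | P (orb f x)}) := by
    apply Set.Subset.antisymm (Set.subset_preimage_image _ _)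
    rintro x ⟨y, hy, e⟩
    refine hP _ _ ?_ hy
    intro γ hγ
    exact congrFun e ⟨γ, hγ⟩
  rw [this]
  exact h1 (Set.toFinite _).measurableSet

variable (μ : Measure X) [IsProbabilityMeasure μ]

lemma sum_measure (B : Finset G) (W : G → Set X) (hW : ∀ γ, MeasurableSet (W γ)) :
    ∑ γ ∈ B, μ (W γ) = ∫⁻ x, (∑ γ ∈ B, (W γ).indicator 1 x) ∂μ := by
  rw [lintegral_finsetSum]
  · exact Finset.sum_congr rfl fun γ _ => (lintegral_indicator_one (hW γ)).symm
  · intro γ _; exact measurable_one.indicator (hW γ)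

open Classical in
lemma sum_ind (B : Finset G) (W : G → Set X) (x : X) :
    (∑ γ ∈ B, (W γ).indicator (1 : X → ENNReal) x) = ((B.filter (fun γ => x ∈ W γ)).card : ENNReal) := by
  simp [Set.indicator_apply]

lemma density (hm : ∀ γ : G, MeasurePreserving (fun x : X => γ • x) μ μ) {ε : ℝ} (hε : 0 < ε) :
    ∃ n : ℕ, ∃ δ > 0, ∀ f : X → Option (Fin 3), Good f → ε ≤ μ.real {x | f x = none} →
      δ ≤ μ.real {x | Impr (ball n) (ball (n+1)) (orb f x)} := by
  classical
  obtain ⟨n, hn⟩ := exists_nat_ge (2 / ε)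
  have hn' : 2 ≤ (n + 1) * ε := by
    rw [div_le_iff₀ hε] at hn; nlinarith
  refine ⟨n, 1 / (n + 1 + (ball n).card), by positivity, fun f hf hH => ?_⟩
  set B := ball n
  set I := {x | Impr (ball n) (ball (n+1)) (orb f x)} with hI
  set H := {x | f x = none} with hHd
  have hmm := fun γ => (hm γ).measurable
  have mI : MeasurableSet I := measurable_local hf.meas hmm (ball (n+1)) _
    fun F F' h => impr_local (ball_mono (Nat.le_succ n)) h
  have mH : MeasurableSet H := hf.meas (measurableSet_singleton none)
  let V : G → Set X := fun γ => {x | Reach (orb f x) n 1 γ}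
  have mV : ∀ γ, MeasurableSet (V γ) := fun γ => measurable_local hf.meas hmm (ball (n+1))
    (fun F => Reach F n 1 γ) fun F F' h => reach_local h
  have lower : ((n + 1 : ℕ) : ENNReal) * μ (H \ I) ≤ ∑ γ ∈ B, μ (V γ) := by
    rw [sum_measure μ B V mV, ← lintegral_indicator_const (mH.diff mI)]
    apply lintegral_mono
    intro x
    simp only [sum_ind]
    by_cases hx : x ∈ H \ I
    · rw [Set.indicator_of_mem hx]
      obtain ⟨T, hT, hc, hr⟩ := reach_many (hf.proper x) (by simpa [orb, hHd] using hx.1) hx.2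
      have : T ⊆ B.filter (fun γ => x ∈ V γ) := fun γ hγ => by
        rw [Finset.mem_filter]; exact ⟨hT hγ, hr γ hγ⟩
      exact_mod_cast hc.trans (Finset.card_le_card this)
    · rw [Set.indicator_of_notMem hx]; simp
  have upper : ∑ γ ∈ B, μ (V γ) ≤ 1 + (B.card : ENNReal) * μ I := by
    have e1 : ∑ γ ∈ B, μ (V γ) = ∑ γ ∈ B, μ ((fun x => γ⁻¹ • x) ⁻¹' V γ) :=
      Finset.sum_congr rfl fun γ _ => ((hm γ⁻¹).measure_preimage (mV γ).nullMeasurableSet).symm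
    rw [e1, sum_measure μ B _ (fun γ => hmm γ⁻¹ (mV γ))]
    have e2 : (1 : ENNReal) + (B.card : ENNReal) * μ I
        = ∫⁻ x, (1 + I.indicator (fun _ => (B.card : ENNReal)) x) ∂μ := by
      rw [lintegral_add_left measurable_const, lintegral_indicator_const mI]; simp
    rw [e2]
    apply lintegral_mono
    intro x
    simp only [sum_ind]
    by_cases hx : x ∈ I
    · rw [Set.indicator_of_mem hx]
      refine le_trans ?_ le_add_self
      exact_mod_cast Finset.card_filter_le _ _
    · rw [Set.indicator_of_notMem hx, add_zero]
      have : (B.filter (fun γ => x ∈ (fun x => γ⁻¹ • x) ⁻¹' V γ)).card ≤ 1 := by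
        rw [Finset.card_le_one]
        have key : ∀ γ, x ∈ (fun x => γ⁻¹ • x) ⁻¹' V γ → Reach (orb f x) n γ⁻¹ 1 := by
          intro γ hγ
          have := reach_translate (show Reach (orb f (γ⁻¹ • x)) n 1 γ from hγ) γ
          rw [one_mul, mul_inv_cancel] at this
          convert this using 1
          funext δ
          simp [orb, smul_smul]
        intro a ha b hb
        rw [Finset.mem_filter] at ha hb
        exact inv_injective (reach_unique (hf.proper x) hx (key a ha.2) (key b hb.2))
      exact_mod_cast this
  have fin := lower.trans upper
  have fin' : ((n : ℝ) + 1) * μ.real (H \ I) ≤ 1 + B.card * μ.real I := by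
    have := ENNReal.toReal_mono (by finiteness) fin
    rw [ENNReal.toReal_add (by finiteness) (by finiteness), ENNReal.toReal_mul, ENNReal.toReal_mul]
      at this
    rw [ENNReal.toReal_natCast, ENNReal.toReal_natCast] at this
    push_cast at this
    simpa [measureReal_def] using this
  have h1 : μ.real H ≤ μ.real (H \ I) + μ.real I := by
    refine (measureReal_mono (fun x hx => ?_)).trans (measureReal_union_le _ _)
    by_cases h : x ∈ I
    · exact Or.inr h
    · exact Or.inl ⟨hx, h⟩
  rw [div_le_iff₀ (by positivity)]
  have h2 : ((n : ℝ) + 1) * ε ≤ (n + 1) * (μ.real (H \ I) + μ.real I) := by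
    apply mul_le_mul_of_nonneg_left _ (by positivity); linarith
  linarith

lemma tile (hm : ∀ γ : G, MeasurePreserving (fun x : X => γ • x) μ μ) {C : Set X}
    (hC : MeasurableSet C) (T : Finset G)
    (hd : ∀ γ ∈ T, ∀ γ' ∈ T, ∀ c ∈ C, ∀ c' ∈ C, γ • c = γ' • c' → γ = γ') :
    μ.real (⋃ γ ∈ T, (fun x => γ⁻¹ • x) ⁻¹' C) = T.card * μ.real C := by
  rw [measureReal_biUnion_finset]
  · have : ∀ γ ∈ T, μ.real ((fun x => γ⁻¹ • x) ⁻¹' C) = μ.real C := fun γ _ => by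
      rw [measureReal_def, (hm γ⁻¹).measure_preimage hC.nullMeasurableSet, measureReal_def]
    rw [Finset.sum_congr rfl this]; simp
  · intro a ha b hb hab
    rw [Function.onFun, Set.disjoint_left]
    intro x hx hx'
    exact hab (hd a ha b hb _ hx _ hx' (by simp))
  · intro γ _; exact (hm γ⁻¹).measurable hC

lemma surgery (hm : ∀ γ : G, MeasurePreserving (fun x : X => γ • x) μ μ)
    {f : X → Option (Fin 3)} (hf : Good f) {A B : Finset G} (hBA : B ⊆ A)
    (hSB : ∀ γ ∈ B, ∀ s ∈ S, s * γ ∈ A) {C : Set X} (hC : MeasurableSet C)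
    (hd : ∀ γ ∈ A, ∀ γ' ∈ A, ∀ c ∈ C, ∀ c' ∈ C, γ • c = γ' • c' → γ = γ')
    (F : Col) (hF : ∀ c ∈ C, ∀ γ ∈ A, f (γ • c) = F γ) (hI : Impr B A F) :
    ∃ f' : X → Option (Fin 3), Good f' ∧
      μ.real {x | f' x = none} + μ.real C ≤ μ.real {x | f x = none} := by
  classical
  obtain ⟨g, g1, g2, g3⟩ := hI
  let f' : X → Option (Fin 3) := fun x =>
    if h : ∃ γ ∈ B, γ⁻¹ • x ∈ C then g h.choose else f x
  have k1 : ∀ γ ∈ B, ∀ c ∈ C, f' (γ • c) = g γ := by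
    intro γ hγ c hc
    have hex : ∃ γ' ∈ B, γ'⁻¹ • γ • c ∈ C := ⟨γ, hγ, by simpa using hc⟩
    simp only [f', dif_pos hex]
    congr 1
    exact hd _ (hBA hex.choose_spec.1) _ (hBA hγ) _ hex.choose_spec.2 _ hc (by simp)
  have k2 : ∀ x, (∀ γ ∈ B, γ⁻¹ • x ∉ C) → f' x = f x := by
    intro x hx
    simp only [f']
    rw [dif_neg]; push Not; exact hx
  have k3 : ∀ γ ∈ A, ∀ c ∈ C, f' (γ • c) = g γ := by
    intro γ hγ c hc
    by_cases hB : γ ∈ B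
    · exact k1 γ hB c hc
    · rw [k2, hF c hc γ hγ, g2 γ hγ hB]
      intro γ' hγ' hc'
      have := hd γ' (hBA hγ') γ hγ _ hc' _ hc (by simp)
      exact hB (this ▸ hγ')
  set U : Set X := ⋃ γ ∈ B, (fun x => γ⁻¹ • x) ⁻¹' C with hU
  have mU : MeasurableSet U :=
    Finset.measurableSet_biUnion _ fun γ _ => (hm γ⁻¹).measurable hC
  have split : ∀ (h : X → Option (Fin 3)) (k : Col), (∀ γ ∈ B, ∀ c ∈ C, h (γ • c) = k γ) →
      (∀ x, x ∉ U → h x = f x) → ∀ o, {x | h x = o} =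
        (⋃ γ ∈ B.filter (fun γ => k γ = o), (fun x => γ⁻¹ • x) ⁻¹' C) ∪ ({x | f x = o} \ U) := by
    intro h k h1 h2 o
    ext x
    simp only [Set.mem_ofPred_eq, Set.mem_union, Set.mem_iUnion, Finset.mem_filter, Set.mem_preimage,
      Set.mem_sdiff, exists_prop]
    by_cases hx : x ∈ U
    · have hx' := hx
      simp only [hU, Set.mem_iUnion, Set.mem_preimage, exists_prop] at hx'
      obtain ⟨γ, hγ, hc⟩ := hx'
      have e := h1 γ hγ _ hc
      rw [smul_inv_smul] at e
      constructor
      · intro ho; exact Or.inl ⟨γ, ⟨hγ, by rw [← e, ho]⟩, hc⟩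
      · rintro (⟨γ', ⟨hγ', ho⟩, hc'⟩ | ⟨_, hn⟩)
        · have e' := h1 γ' hγ' _ hc'
          rw [smul_inv_smul] at e'
          rw [e', ho]
        · exact absurd hx hn
    · rw [h2 x hx]
      constructor
      · intro ho; exact Or.inr ⟨ho, hx⟩
      · rintro (⟨γ', ⟨hγ', ho⟩, hc'⟩ | ⟨h, _⟩)
        · exact absurd (by simp only [hU, Set.mem_iUnion, Set.mem_preimage, exists_prop]; exact ⟨γ', hγ', hc'⟩) hx
        · exact h
  have notU : ∀ x, x ∉ U → f' x = f x := by
    intro x hx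
    apply k2
    intro γ hγ hc
    exact hx (by simp only [hU, Set.mem_iUnion, Set.mem_preimage, exists_prop]; exact ⟨γ, hγ, hc⟩)
  have mf : ∀ o, MeasurableSet {x | f x = o} := fun o => hf.meas (measurableSet_singleton o)
  have mT : ∀ T : Finset G, MeasurableSet (⋃ γ ∈ T, (fun x : X => γ⁻¹ • x) ⁻¹' C) := fun T =>
    Finset.measurableSet_biUnion _ fun γ _ => (hm γ⁻¹).measurable hC
  have s1 := split f' g k1 notU
  have s2 := split f F (fun γ hγ c hc => hF c hc γ (hBA hγ)) (fun _ _ => rfl)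
  have val : ∀ k : Col, μ.real ((⋃ γ ∈ B.filter (fun γ => k γ = none), (fun x => γ⁻¹ • x) ⁻¹' C)
      ∪ ({x | f x = none} \ U)) = (B.filter (fun γ => k γ = none)).card * μ.real C
        + μ.real ({x | f x = none} \ U) := by
    intro k
    rw [measureReal_union _ ((mf none).diff mU) (measure_ne_top _ _) (measure_ne_top _ _), tile μ hm hC]
    · intro γ hγ γ' hγ'
      exact hd γ (hBA (Finset.mem_filter.1 hγ).1) γ' (hBA (Finset.mem_filter.1 hγ').1)
    · rw [Set.disjoint_left]
      intro x hx hx'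
      apply hx'.2
      simp only [Set.mem_iUnion, Finset.mem_filter, exists_prop, hU] at hx ⊢
      obtain ⟨γ, h1, h2⟩ := hx
      exact ⟨γ, h1.1, h2⟩
  refine ⟨f', ⟨?_, ?_⟩, ?_⟩
  · apply measurable_to_countable'
    intro o
    have : f' ⁻¹' {o} = {x | f' x = o} := rfl
    rw [this, s1 o]
    exact (mT _).union ((mf o).diff mU)
  · have main : ∀ x, x ∈ U → ∀ s ∈ S, f' x ≠ none → f' (s • x) ≠ f' x := by
      intro x hx s hs hne
      simp only [hU, Set.mem_iUnion, Set.mem_preimage, exists_prop] at hx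
      obtain ⟨γ, hγ, hc⟩ := hx
      have e1 := k1 γ hγ _ hc
      have e2 := k3 (s * γ) (hSB γ hγ s hs) _ hc
      rw [mul_smul, smul_inv_smul] at e2
      rw [smul_inv_smul] at e1
      rw [e1] at hne
      rw [e1, e2]
      exact g1 γ hγ s hs hne
    intro x s hs hne
    by_cases h1 : x ∈ U
    · exact main x h1 s hs hne
    · by_cases h2 : s • x ∈ U
      · intro e
        have := main _ h2 s⁻¹ (inv_mem_S hs) (by rwa [e])
        rw [inv_smul_smul] at this
        exact this e.symm
      · rw [notU _ h1] at hne
        rw [notU _ h1, notU _ h2]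
        exact hf.prop x s hs hne
  · have v1 := val g
    have v2 := val F
    rw [← s1 none] at v1
    rw [← s2 none] at v2
    rw [v1, v2]
    have : ((B.filter (fun γ => g γ = none)).card : ℝ) + 1 ≤ (B.filter (fun γ => F γ = none)).card := by
      exact_mod_cast g3
    nlinarith [measureReal_nonneg (μ := μ) (s := C)]

def Sep : Prop := ∀ D : Finset G, 1 ∉ D → ∀ η : ℝ, 0 < η → ∃ K : ℕ, ∃ κ : X → Fin K,
  Measurable κ ∧ μ.real {x | ∃ γ ∈ D, κ (γ • x) = κ x} ≤ η

lemma step (hm : ∀ γ : G, MeasurePreserving (fun x : X => γ • x) μ μ) (hsep : Sep (X := X) μ)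
    {n : ℕ} {δ : ℝ} (hδ : 0 < δ) : ∃ δ' > 0, ∀ f : X → Option (Fin 3), Good f →
      δ ≤ μ.real {x | Impr (ball n) (ball (n+1)) (orb f x)} →
      ∃ f' : X → Option (Fin 3), Good f' ∧
        μ.real {x | f' x = none} + δ' ≤ μ.real {x | f x = none} := by
  classical
  set A := ball (n+1) with hA
  set D : Finset G := ((A ×ˢ A).image (fun p => p.1⁻¹ * p.2)).erase 1 with hD
  obtain ⟨K, κ, mκ, hκ⟩ := hsep D (by simp [hD]) (δ/2) (by positivity)
  set N : ℕ := Fintype.card (Fin K × (A → Option (Fin 3))) with hN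
  refine ⟨δ / 2 / (N + 1), by positivity, fun f hf hI => ?_⟩
  have hmm := fun γ => (hm γ).measurable
  set I := {x | Impr (ball n) (ball (n+1)) (orb f x)} with hId
  have mI : MeasurableSet I := measurable_local hf.meas hmm (ball (n+1)) _
    fun F F' h => impr_local (ball_mono (Nat.le_succ n)) h
  set Y : Set X := {x | ∃ γ ∈ D, κ (γ • x) = κ x} with hY
  have mY : MeasurableSet Y := by
    have : Y = ⋃ γ ∈ D, {x | κ (γ • x) = κ x} := by ext; simp [hY]
    rw [this]
    exact Finset.measurableSet_biUnion _ fun γ _ => measurableSet_eq_fun (mκ.comp (hmm γ)) mκ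
  let pat : X → Fin K × (A → Option (Fin 3)) := fun x => (κ x, fun γ => f ((γ : G) • x))
  have mpat : Measurable pat :=
    mκ.prodMk (measurable_pi_lambda _ fun γ => hf.meas.comp (hmm γ))
  let C : Fin K × (A → Option (Fin 3)) → Set X := fun q => (I \ Y) ∩ pat ⁻¹' {q}
  have mC : ∀ q, MeasurableSet (C q) := fun q =>
    (mI.diff mY).inter (mpat (measurableSet_singleton q))
  have hcov : I \ Y ⊆ ⋃ q ∈ (Finset.univ : Finset (Fin K × (A → Option (Fin 3)))), C q := by
    intro x hx
    simp only [Finset.mem_univ, Set.iUnion_true, Set.mem_iUnion]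
    exact ⟨pat x, hx, rfl⟩
  have hsum : δ / 2 ≤ ∑ q, μ.real (C q) := by
    have h1 : μ.real I ≤ μ.real (I \ Y) + μ.real Y := by
      refine (measureReal_mono (fun x hx => ?_)).trans (measureReal_union_le _ _)
      by_cases h : x ∈ Y
      · exact Or.inr h
      · exact Or.inl ⟨hx, h⟩
    have h2 := (measureReal_mono (μ := μ) hcov (measure_ne_top _ _)).trans (measureReal_biUnion_finset_le _ _)
    linarith
  obtain ⟨q, hq⟩ : ∃ q, δ / 2 / (N + 1) ≤ μ.real (C q) := by
    by_contra hcon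
    push Not at hcon
    have h1 : ∑ q, μ.real (C q) ≤ ∑ q : Fin K × (A → Option (Fin 3)), δ / 2 / ((N:ℝ) + 1) :=
      Finset.sum_le_sum fun q _ => (hcon q).le
    rw [Finset.sum_const, Finset.card_univ, ← hN, nsmul_eq_mul] at h1
    have h2 : (N : ℝ) * (δ / 2 / (N + 1)) < δ / 2 := by
      rw [← mul_div_assoc, div_lt_iff₀ (by positivity)]; nlinarith
    linarith
  have hpos : 0 < δ / 2 / ((N:ℝ) + 1) := by positivity
  obtain ⟨x0, hx0⟩ : (C q).Nonempty := by
    rw [Set.nonempty_iff_ne_empty]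
    intro e
    rw [e, measureReal_empty] at hq
    linarith
  obtain ⟨f', hf', h⟩ := surgery μ hm hf (A := A) (B := ball n) (ball_mono (Nat.le_succ n))
    (fun γ hγ s hs => ball_succ hγ hs) (mC q)
    (by
      intro γ hγ γ' hγ' c hc c' hc' e
      by_contra hne
      apply hc.1.2
      refine ⟨γ'⁻¹ * γ, ?_, ?_⟩
      · rw [hD, Finset.mem_erase]
        refine ⟨fun h => hne (inv_mul_eq_one.1 h).symm, ?_⟩
        simp only [Finset.mem_image, Finset.mem_product, Prod.exists]
        exact ⟨γ', γ, ⟨hγ', hγ⟩, rfl⟩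
      · have : (γ'⁻¹ * γ) • c = c' := by rw [mul_smul, e, inv_smul_smul]
        rw [this]
        have h1 : pat c = pat c' := hc.2.trans hc'.2.symm
        exact (congrArg Prod.fst h1).symm)
    (orb f x0)
    (by
      intro c hc γ hγ
      have h1 : pat c = pat x0 := hc.2.trans hx0.2.symm
      exact congrFun (congrArg Prod.snd h1) ⟨γ, hγ⟩)
    hx0.1.1
  exact ⟨f', hf', by linarith⟩

lemma approx (hm : ∀ γ : G, MeasurePreserving (fun x : X => γ • x) μ μ) (hsep : Sep (X := X) μ)
    {ε : ℝ} (hε : 0 < ε) :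
    ∃ f : X → Option (Fin 3), Good f ∧ μ.real {x | f x = none} < ε := by
  obtain ⟨n, δ, hδ, h1⟩ := density μ hm hε
  obtain ⟨δ', hδ', h2⟩ := step μ hm hsep (n := n) hδ
  by_contra hcon
  push Not at hcon
  have key : ∀ k : ℕ, ∃ f : X → Option (Fin 3), Good f ∧ μ.real {x | f x = none} ≤ 1 - k * δ' := by
    intro k
    induction k with
    | zero =>
      refine ⟨fun _ => none, ⟨measurable_const, by simp⟩, ?_⟩
      simp
    | succ k ih =>
      obtain ⟨f, hf, hk⟩ := ih
      obtain ⟨f', hf', h⟩ := h2 f hf (h1 f hf (hcon f hf))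
      exact ⟨f', hf', by push_cast; linarith⟩
  obtain ⟨k, hk⟩ := exists_nat_gt (1 / δ')
  obtain ⟨f, hf, h⟩ := key k
  rw [div_lt_iff₀ hδ'] at hk
  have := measureReal_nonneg (μ := μ) (s := {x | f x = none})
  linarith

lemma three_col (hm : ∀ γ : G, MeasurePreserving (fun x : X => γ • x) μ μ) (hsep : Sep (X := X) μ)
    {ε : ℝ} (hε : 0 < ε) :
    ∃ f : X → Fin 3, Measurable f ∧ μ {x | ∃ s ∈ S, f (s • x) = f x} < ENNReal.ofReal ε := by
  obtain ⟨f, hf, h⟩ := approx μ hm hsep (show 0 < ε / 5 by positivity)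
  refine ⟨fun x => (f x).getD 0, ?_, ?_⟩
  · exact (Measurable.of_discrete (f := fun o : Option (Fin 3) => o.getD 0)).comp hf.meas
  set H := {x | f x = none} with hH
  have mH : MeasurableSet H := hf.meas (measurableSet_singleton none)
  have hsub : {x | ∃ s ∈ S, (f (s • x)).getD 0 = (f x).getD 0} ⊆
      H ∪ ⋃ s ∈ S, (fun x => s • x) ⁻¹' H := by
    rintro x ⟨s, hs, e⟩
    by_cases h1 : f x = none
    · exact Or.inl h1
    right
    simp only [Set.mem_iUnion, exists_prop, Set.mem_preimage]
    refine ⟨s, hs, ?_⟩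
    by_contra h2
    have h2' : f (s • x) ≠ none := h2
    obtain ⟨a, ha⟩ := Option.ne_none_iff_exists'.1 h1
    obtain ⟨b, hb⟩ := Option.ne_none_iff_exists'.1 h2'
    rw [ha, hb] at e
    simp at e
    exact hf.prop x s hs h1 (by rw [ha, hb, e])
  rw [← ENNReal.ofReal_toReal (measure_ne_top μ _), ENNReal.ofReal_lt_ofReal_iff hε]
  change μ.real _ < ε
  have h1 := (measureReal_mono (μ := μ) hsub (measure_ne_top _ _)).trans (measureReal_union_le _ _)
  have h2 : μ.real (⋃ s ∈ S, (fun x => s • x) ⁻¹' H) ≤ 4 * μ.real H := by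
    refine (measureReal_biUnion_finset_le _ _).trans ?_
    have : ∀ s ∈ S, μ.real ((fun x => s • x) ⁻¹' H) = μ.real H := fun s _ => by
      rw [measureReal_def, (hm s).measure_preimage mH.nullMeasurableSet, measureReal_def]
    rw [Finset.sum_congr rfl this, Finset.sum_const, nsmul_eq_mul]
    have : (S.card : ℝ) ≤ 4 := by exact_mod_cast card_S
    exact mul_le_mul_of_nonneg_right this measureReal_nonneg
  linarith

end meas

section bern

lemma prob_nu : IsProbabilityMeasure (volume.restrict (Set.Icc (0:ℝ) 1)) :=
  ⟨by simp⟩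

attribute [local instance] prob_nu arrowAction

lemma smul_app (γ : G) (x : G → ℝ) (δ : G) : (γ • x) δ = x (γ⁻¹ * δ) := rfl

variable (μ : Measure (G → ℝ))

lemma mp (hb : ∀ (s : Finset G) (t : G → Set ℝ), (∀ i, MeasurableSet (t i)) →
      μ (Set.pi s t) = ∏ i ∈ s, volume.restrict (Set.Icc (0:ℝ) 1) (t i)) (γ : G) :
    MeasurePreserving (fun x : G → ℝ => γ • x) μ μ := by
  classical
  have hm : Measurable (fun x : G → ℝ => γ • x) :=
    measurable_pi_lambda _ fun δ => measurable_pi_apply (γ⁻¹ * δ)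
  refine ⟨hm, ?_⟩
  rw [Measure.eq_infinitePi (fun _ => volume.restrict (Set.Icc (0:ℝ) 1)) hb]
  apply Measure.eq_infinitePi
  intro s t ht
  rw [Measure.map_apply hm (.pi s.countable_toSet fun i _ => ht i)]
  have e : (fun x : G → ℝ => γ • x) ⁻¹' (Set.pi s t)
      = Set.pi (s.image (fun δ => γ⁻¹ * δ) : Finset G) (fun δ => t (γ * δ)) := by
    ext x
    simp [Set.mem_pi, smul_app]
    constructor
    · intro h i hi
      have := h _ hi
      rwa [inv_mul_cancel_left] at this
    · intro h i hi
      have := h (γ⁻¹ * i) (by rwa [mul_inv_cancel_left])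
      rwa [mul_inv_cancel_left] at this
  rw [e, Measure.infinitePi_pi _ (fun i _ => ht _), Finset.prod_image]
  · refine Finset.prod_congr rfl fun x _ => ?_
    have h : γ * (γ⁻¹ * x) = x := mul_inv_cancel_left γ x
    exact congrArg (fun y => volume.restrict (Set.Icc (0:ℝ) 1) (t y)) h
  · intro a _ b _ h; simpa using h

lemma sep [IsProbabilityMeasure μ]
    (hb : ∀ (s : Finset G) (t : G → Set ℝ), (∀ i, MeasurableSet (t i)) →
      μ (Set.pi s t) = ∏ i ∈ s, volume.restrict (Set.Icc (0:ℝ) 1) (t i)) : Sep μ := by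
  classical
  intro D hD η hη
  obtain ⟨K, hK⟩ := exists_nat_gt (D.card / η)
  have hK0 : (0:ℝ) < K := lt_of_le_of_lt (by positivity) hK
  set ν := volume.restrict (Set.Icc (0:ℝ) 1) with hν
  let q : ℝ → Fin (K+1) := fun t => ⟨min K ⌊K * t⌋₊, by omega⟩
  have mq : Measurable q := by
    have : Measurable (fun t : ℝ => ⌊K * t⌋₊) :=
      Nat.measurable_floor.comp (measurable_const.mul measurable_id)
    exact (Measurable.of_discrete (f := fun n : ℕ => (⟨min K n, by omega⟩ : Fin (K+1)))).comp this
  have mi : ∀ i, MeasurableSet (q ⁻¹' {i}) := fun i => mq (measurableSet_singleton i)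
  have hp : ∀ i, ν.real (q ⁻¹' {i}) ≤ 1 / K := by
    intro i
    have hsub : q ⁻¹' {i} ∩ Set.Icc (0:ℝ) 1 ⊆ Set.Icc ((i:ℕ) / (K:ℝ)) (((i:ℕ) + 1) / (K:ℝ)) := by
      rintro t ⟨ht, h0, h1⟩
      have hi : min K ⌊K * t⌋₊ = (i:ℕ) := congrArg Fin.val ht
      have hfl : ⌊K * t⌋₊ ≤ K := by
        apply Nat.floor_le_of_le; nlinarith
      rw [min_eq_right hfl] at hi
      have a1 := Nat.floor_le (show 0 ≤ K * t by positivity)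
      have a2 := Nat.lt_floor_add_one (K * t)
      rw [hi] at a1 a2
      constructor
      · rw [div_le_iff₀ hK0]; linarith
      · rw [le_div_iff₀ hK0]; linarith
    rw [hν, measureReal_restrict_apply (mi i)]
    refine (measureReal_mono hsub (by simp)).trans ?_
    rw [Real.volume_real_Icc]
    apply max_le _ (by positivity)
    apply le_of_eq; field_simp; ring
  have hs1 : ∑ i, ν.real (q ⁻¹' {i}) = 1 := by
    have : ν.real (⋃ i ∈ (Finset.univ : Finset (Fin (K+1))), q ⁻¹' {i}) = 1 := by
      have e : (⋃ i ∈ (Finset.univ : Finset (Fin (K+1))), q ⁻¹' {i}) = Set.univ := by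
        ext; simp
      rw [e]; exact probReal_univ
    rw [← this, measureReal_biUnion_finset]
    · intro a _ b _ hab
      rw [Function.onFun, Set.disjoint_left]
      intro x hx hx'
      exact hab (hx.symm.trans hx')
    · intro i _; exact mi i
  have hone : ∀ γ ∈ D, μ.real {x | q ((γ • x) 1) = q (x 1)} ≤ 1 / K := by
    intro γ hγ
    have hne : γ⁻¹ * 1 ≠ 1 := by
      intro h; apply hD; simp at h; rwa [h] at hγ
    have hsub : {x : G → ℝ | q ((γ • x) 1) = q (x 1)} ⊆
        ⋃ i ∈ (Finset.univ : Finset (Fin (K+1))),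
          Set.pi (({γ⁻¹ * 1, 1} : Finset G) : Set G) (fun _ => q ⁻¹' {i}) := by
      intro x hx
      simp only [Finset.mem_univ, Set.iUnion_true, Set.mem_iUnion]
      refine ⟨q (x 1), ?_⟩
      intro δ hδ
      simp only [Finset.coe_insert, Finset.coe_singleton, Set.mem_insert_iff,
        Set.mem_singleton_iff] at hδ
      rcases hδ with rfl | rfl
      · exact hx
      · rfl
    refine (measureReal_mono hsub (measure_ne_top _ _)).trans
      ((measureReal_biUnion_finset_le _ _).trans ?_)
    have : ∀ i ∈ (Finset.univ : Finset (Fin (K+1))),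
        μ.real (Set.pi (({γ⁻¹ * 1, 1} : Finset G) : Set G) (fun _ => q ⁻¹' {i}))
          ≤ 1 / K * ν.real (q ⁻¹' {i}) := by
      intro i _
      rw [measureReal_def, hb _ _ (fun _ => mi i), Finset.prod_pair hne, ENNReal.toReal_mul]
      exact mul_le_mul_of_nonneg_right (hp i) ENNReal.toReal_nonneg
    refine (Finset.sum_le_sum this).trans ?_
    rw [← Finset.mul_sum, hs1, mul_one]
  refine ⟨K+1, fun x => q (x 1), mq.comp (measurable_pi_apply 1), ?_⟩
  have e : {x : G → ℝ | ∃ γ ∈ D, q ((γ • x) 1) = q (x 1)} =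
      ⋃ γ ∈ D, {x | q ((γ • x) 1) = q (x 1)} := by ext; simp
  rw [e]
  refine (measureReal_biUnion_finset_le _ _).trans ((Finset.sum_le_sum hone).trans ?_)
  rw [Finset.sum_const, nsmul_eq_mul, mul_one_div, div_le_iff₀ hK0]
  rw [div_lt_iff₀ hη] at hK
  linarith

lemma final [IsProbabilityMeasure μ]
    (hμ : ∀ s : Finset G,
      Measure.map (fun (x : G → ℝ) (v : s) => x v) μ
        = Measure.pi (fun _ : s => volume.restrict (Set.Icc (0:ℝ) 1)))
    (ε : ℝ) (hε : 0 < ε) :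
    ∃ f : (G → ℝ) → Fin 3, Measurable f ∧
      μ {x | ∃ s ∈ S, f (fun δ => x (s⁻¹ * δ)) = f x} < ENNReal.ofReal ε := by
  have hinf : μ = Measure.infinitePi (fun _ : G => volume.restrict (Set.Icc (0:ℝ) 1)) :=
    (Measure.isProjectiveLimit_infinitePi
      (fun _ : G => volume.restrict (Set.Icc (0:ℝ) 1))).unique hμ |>.symm
  have hb : ∀ (s : Finset G) (t : G → Set ℝ), (∀ i, MeasurableSet (t i)) →
      μ (Set.pi s t) = ∏ i ∈ s, volume.restrict (Set.Icc (0:ℝ) 1) (t i) := by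
    intro s t ht
    rw [hinf]; exact Measure.infinitePi_pi _ (fun i _ => ht i)
  exact three_col μ (mp μ hb) (sep μ hb) hε

end bern

end F2Col

/-- Approximate coloring of the Bernoulli shift of the free group of rank 2: for every
ε > 0 there is a measurable map `f : (FreeGroup (Fin 2) → ℝ) → Fin 3` which is improper
(i.e. `f (s • x) = f x` for some generator or inverse generator `s`) only on a set of
measure less than ε. Here μ is the product over the group of Lebesgue measure on [0,1],
characterized by its finite marginals, and `(γ • x) δ = x (γ⁻¹ * δ)`. -/
theorem bernoulli_shift_F2_approximate_three_coloring
    (μ : Measure (FreeGroup (Fin 2) → ℝ)) [IsProbabilityMeasure μ]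
    (hμ : ∀ s : Finset (FreeGroup (Fin 2)),
      Measure.map (fun (x : FreeGroup (Fin 2) → ℝ) (v : s) => x v) μ
        = Measure.pi (fun _ : s => volume.restrict (Set.Icc (0:ℝ) 1)))
    (ε : ℝ) (hε : 0 < ε) :
    ∃ f : (FreeGroup (Fin 2) → ℝ) → Fin 3,
      Measurable f ∧
      μ {x | ∃ s : FreeGroup (Fin 2),
          (∃ i : Fin 2, s = FreeGroup.of i ∨ s = (FreeGroup.of i)⁻¹) ∧
          f (fun δ => x (s⁻¹ * δ)) = f x} < ENNReal.ofReal ε := by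
  obtain ⟨f, hf, h⟩ := F2Col.final μ hμ ε hε
  refine ⟨f, hf, lt_of_le_of_lt (measure_mono ?_) h⟩
  rintro x ⟨s, ⟨i, hi⟩, e⟩
  refine ⟨s, F2Col.mem_S.2 ?_, e⟩
  rcases hi with rfl | rfl
  · exact ⟨(i, true), rfl⟩
  · exact ⟨(i, false), rfl⟩
end

section
/- For every ε > 0 there exists an fiid labelling f : X → (V → Fin 5) of the 6-regular tree T_6 such that for μ-a.e. x ∈ X the labelling f(x) is a proper coloring of G (i.e. f(x)(u) ≠ f(x)(v) whenever u and v are adjacent), and such that for every vertex v ∈ V, μ({x : f(x)(v) = 4}) < ε. -/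
open MeasureTheory

namespace T6

/-- A message: colouring time and colour. -/
abbrev Msg := ℝ × ZMod 4

/-- the first colour, starting from `o`, that is not in `U` -/
def pick (o : ZMod 4) (U : Finset (ZMod 4)) : ZMod 4 :=
  if o ∉ U then o else if o + 1 ∉ U then o + 1 else if o + 2 ∉ U then o + 2 else o + 3

lemma pick_notMem : ∀ (o : ZMod 4) (U : Finset (ZMod 4)), U.card ≤ 3 → pick o U ∉ U := by
  decide

lemma pick_shift : ∀ (o : ZMod 4) (U : Finset (ZMod 4)),
    pick (o + 1) (U.image (fun c => c + 1)) = pick o U + 1 := by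
  decide

section det
variable {V : Type}

open Classical in
/-- colours used up to time `T` -/
noncomputable def usedLe (W : Finset V) (M : V → Msg) (T : ℝ) : Finset (ZMod 4) :=
  (W.filter (fun w => (M w).1 ≤ T)).image (fun w => (M w).2)

open Classical in
/-- colours used before time `T` -/
noncomputable def usedLt (W : Finset V) (M : V → Msg) (T : ℝ) : Finset (ZMod 4) :=
  (W.filter (fun w => (M w).1 < T)).image (fun w => (M w).2)

/-- colouring time -/
noncomputable def phiT (t : ℝ) (W : Finset V) (M : V → Msg) : ℝ :=
  W.fold min t (fun w => if 3 ≤ (usedLe W M (M w).1).card then (M w).1 else t)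

/-- the update rule -/
noncomputable def phi (t : ℝ) (o : ZMod 4) (W : Finset V) (M : V → Msg) : Msg :=
  (phiT t W M, pick o (usedLe W M (phiT t W M)))

lemma mem_usedLe {W : Finset V} {M : V → Msg} {T : ℝ} {c : ZMod 4} :
    c ∈ usedLe W M T ↔ ∃ w ∈ W, (M w).1 ≤ T ∧ (M w).2 = c := by
  simp [usedLe, and_assoc]

lemma mem_usedLt {W : Finset V} {M : V → Msg} {T : ℝ} {c : ZMod 4} :
    c ∈ usedLt W M T ↔ ∃ w ∈ W, (M w).1 < T ∧ (M w).2 = c := by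
  simp [usedLt, and_assoc]

lemma usedLe_mono (W : Finset V) (M : V → Msg) {S T : ℝ} (h : S ≤ T) :
    usedLe W M S ⊆ usedLe W M T := by
  intro c hc
  rw [mem_usedLe] at *
  obtain ⟨w, hw, h1, h2⟩ := hc
  exact ⟨w, hw, h1.trans h, h2⟩

lemma usedLe_sub_usedLt (W : Finset V) (M : V → Msg) {S T : ℝ} (h : S < T) :
    usedLe W M S ⊆ usedLt W M T := by
  intro c hc
  rw [mem_usedLe] at hc
  rw [mem_usedLt]
  obtain ⟨w, hw, h1, h2⟩ := hc
  exact ⟨w, hw, h1.trans_lt h, h2⟩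

lemma phiT_le (t : ℝ) (W : Finset V) (M : V → Msg) : phiT t W M ≤ t := by
  rw [phiT, Finset.fold_min_le]; exact Or.inl le_rfl

lemma phiT_forced {t : ℝ} {W : Finset V} {M : V → Msg} (h : phiT t W M < t) :
    3 ≤ (usedLe W M (phiT t W M)).card := by
  have h1 : phiT t W M ≤ phiT t W M := le_rfl
  nth_rewrite 1 [phiT] at h1
  rw [Finset.fold_min_le] at h1
  rcases h1 with h1 | ⟨w, hw, h1⟩
  · exact absurd h1 (not_le.2 h)
  · split_ifs at h1 with h2
    · exact h2.trans (Finset.card_le_card (usedLe_mono W M h1))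
    · exact absurd h1 (not_le.2 h)

lemma le_phiT {t : ℝ} {W : Finset V} {M : V → Msg} {T : ℝ} :
    T ≤ phiT t W M ↔ T ≤ t ∧ (usedLt W M T).card ≤ 2 := by
  classical
  rw [phiT, Finset.le_fold_min]
  refine and_congr_right fun hT => ⟨fun h => ?_, fun h w hw => ?_⟩
  · by_contra hc
    push Not at hc
    have hne : (W.filter (fun w => (M w).1 < T)).Nonempty := by
      rw [Finset.nonempty_iff_ne_empty]
      intro h0
      simp [usedLt, h0] at hc
    obtain ⟨w, hw, hmax⟩ := Finset.exists_max_image _ (fun w => (M w).1) hne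
    rw [Finset.mem_filter] at hw
    have h3 : 3 ≤ (usedLe W M (M w).1).card := by
      refine le_trans hc (Finset.card_le_card ?_)
      intro c hcc
      rw [mem_usedLt] at hcc
      obtain ⟨w', hw', h1, h2⟩ := hcc
      exact mem_usedLe.2 ⟨w', hw', hmax w' (Finset.mem_filter.2 ⟨hw', h1⟩), h2⟩
    have := h w hw.1
    rw [if_pos h3] at this
    linarith [hw.2]
  · split_ifs with h3
    · by_contra hlt
      push Not at hlt
      have := Finset.card_le_card (usedLe_sub_usedLt W M hlt)
      omega
    · exact hT

lemma phiT_mem (t : ℝ) (W : Finset V) (M : V → Msg) :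
    phiT t W M = t ∨ ∃ w ∈ W, phiT t W M = (M w).1 := by
  by_cases h : phiT t W M = t
  · exact Or.inl h
  right
  have hlt := lt_of_le_of_ne (phiT_le t W M) h
  have h1 : phiT t W M ≤ phiT t W M := le_rfl
  nth_rewrite 1 [phiT] at h1
  rw [Finset.fold_min_le] at h1
  have h2 : phiT t W M ≤ phiT t W M := le_rfl
  nth_rewrite 2 [phiT] at h2
  rw [Finset.le_fold_min] at h2
  rcases h1 with h1 | ⟨w, hw, h1⟩
  · exact absurd h1 (not_le.2 hlt)
  · have h3 := h2.2 w hw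
    split_ifs at h1 h3 with h4
    · exact ⟨w, hw, le_antisymm h3 h1⟩
    · exact absurd h1 (not_le.2 hlt)

lemma usedLe_congr {W : Finset V} {M M' : V → Msg} {T1 s : ℝ} (hs : s < T1)
    (h : ∀ w ∈ W, M w = M' w ∨ (T1 ≤ (M w).1 ∧ T1 ≤ (M' w).1)) :
    usedLe W M s = usedLe W M' s := by
  ext c
  simp only [mem_usedLe]
  constructor
  · rintro ⟨w, hw, h1, h2⟩
    rcases h w hw with e | ⟨e, -⟩
    · exact ⟨w, hw, e ▸ h1, e ▸ h2⟩
    · linarith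
  · rintro ⟨w, hw, h1, h2⟩
    rcases h w hw with e | ⟨-, e⟩
    · exact ⟨w, hw, e ▸ h1, e ▸ h2⟩
    · linarith

lemma phiT_le_of_agree {t : ℝ} {W : Finset V} {M M' : V → Msg} {T1 : ℝ}
    (h : ∀ w ∈ W, M w = M' w ∨ (T1 ≤ (M w).1 ∧ T1 ≤ (M' w).1))
    (hτ : phiT t W M < T1) : phiT t W M' ≤ phiT t W M := by
  by_contra hc
  push Not at hc
  rcases lt_or_eq_of_le (phiT_le t W M) with h1 | h1
  · have h2 := phiT_forced h1
    rw [usedLe_congr hτ h] at h2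
    have h3 := (le_phiT.1 (le_refl (phiT t W M'))).2
    have := Finset.card_le_card (usedLe_sub_usedLt W M' hc)
    omega
  · have := phiT_le t W M'
    linarith

lemma phi_agree {t : ℝ} {o : ZMod 4} {W : Finset V} {M M' : V → Msg} {T1 : ℝ}
    (h : ∀ w ∈ W, M w = M' w ∨ (T1 ≤ (M w).1 ∧ T1 ≤ (M' w).1))
    (hτ : phiT t W M < T1) : phi t o W M = phi t o W M' := by
  have h1 := phiT_le_of_agree h hτ
  have h' : ∀ w ∈ W, M' w = M w ∨ (T1 ≤ (M' w).1 ∧ T1 ≤ (M w).1) :=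
    fun w hw => (h w hw).imp Eq.symm And.symm
  have h2 := phiT_le_of_agree h' (lt_of_le_of_lt h1 hτ)
  have h3 : phiT t W M = phiT t W M' := le_antisymm h2 h1
  rw [phi, phi, ← h3, usedLe_congr hτ h]

/-- discrepancy of two messages, first visible in the window `[T0,T1)` -/
def Disc (T0 T1 : ℝ) (m m' : Msg) : Prop :=
  m ≠ m' ∧ T0 ≤ m.1 ∧ T0 ≤ m'.1 ∧ (m.1 < T1 ∨ m'.1 < T1)

lemma Disc.symm {T0 T1 : ℝ} {m m' : Msg} (h : Disc T0 T1 m m') : Disc T0 T1 m' m :=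
  ⟨h.1.symm, h.2.2.1, h.2.1, h.2.2.2.symm⟩

open Classical in
lemma disc_step {t : ℝ} {o : ZMod 4} {W : Finset V} {M M' : V → Msg} {T0 T1 : ℝ}
    (hD : Disc T0 T1 (phi t o W M) (phi t o W M')) (hτ : phiT t W M < T1) :
    (∃ w ∈ W, M w ≠ M' w ∧ ((M w).1 < T0 ∨ (M' w).1 < T0)) ∨
    (∃ w ∈ W, Disc T0 T1 (M w) (M' w) ∧ ((T0 ≤ t ∧ t < T1) ∨
      ∃ w' ∈ W.erase w, (T0 ≤ (M w').1 ∧ (M w').1 < T1) ∨ (T0 ≤ (M' w').1 ∧ (M' w').1 < T1))) ∨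
    (∃ w ∈ W, Disc T0 T1 (M w) (M' w) ∧ (M w).1 < T1 ∧ T0 ≤ t ∧
      (usedLt (W.erase w) M T0).card = 2 ∧ (M w).2 ∉ usedLt (W.erase w) M T0) := by
  by_cases h1 : ∃ w ∈ W, M w ≠ M' w ∧ ((M w).1 < T0 ∨ (M' w).1 < T0)
  · exact Or.inl h1
  right
  push Not at h1
  have h2 : ∃ w ∈ W, Disc T0 T1 (M w) (M' w) := by
    by_contra hc
    push Not at hc
    refine hD.1 (phi_agree (T1 := T1) ?_ hτ)
    intro w hw
    by_cases e : M w = M' w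
    · exact Or.inl e
    · right
      have h3 := h1 w hw e
      have h4 := hc w hw
      simp only [Disc, not_and, not_or, not_lt] at h4
      exact h4 e h3.1 h3.2
  obtain ⟨w, hw, hwD⟩ := h2
  by_cases hex : ((T0 ≤ t ∧ t < T1) ∨
      ∃ w' ∈ W.erase w, (T0 ≤ (M w').1 ∧ (M w').1 < T1) ∨ (T0 ≤ (M' w').1 ∧ (M' w').1 < T1))
  · exact Or.inl ⟨w, hw, hwD, hex⟩
  right
  push Not at hex
  obtain ⟨ht, hoth⟩ := hex
  have hT0 : T0 ≤ phiT t W M := hD.2.1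
  have hT0t : T0 ≤ t := hT0.trans (phiT_le t W M)
  have hT1t := ht hT0t
  have hforced := phiT_forced (lt_of_lt_of_le hτ hT1t)
  have hU : (usedLt W M T0).card ≤ 2 := (le_phiT.1 hT0).2
  have hsub : usedLt (W.erase w) M T0 ⊆ usedLt W M T0 := by
    intro c hc
    rw [mem_usedLt] at *
    obtain ⟨a, ha, hb⟩ := hc
    exact ⟨a, Finset.mem_of_mem_erase ha, hb⟩
  have hU' := (Finset.card_le_card hsub).trans hU
  have hcov : usedLe W M (phiT t W M) ⊆
      usedLt (W.erase w) M T0 ∪ (if (M w).1 < T1 then {(M w).2} else ∅) := by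
    intro c hc
    rw [mem_usedLe] at hc
    obtain ⟨a, ha, hb, rfl⟩ := hc
    rw [Finset.mem_union]
    by_cases e : a = w
    · subst e
      right
      rw [if_pos (hb.trans_lt hτ)]
      simp
    · left
      have ha' := Finset.mem_erase.2 ⟨e, ha⟩
      refine mem_usedLt.2 ⟨a, ha', ?_, rfl⟩
      by_contra hc
      push Not at hc
      have := (hoth a ha').1 hc
      linarith
  have hcard := hforced.trans ((Finset.card_le_card hcov).trans (Finset.card_union_le _ _))
  have hlt : (M w).1 < T1 := by
    by_contra hc
    rw [if_neg hc] at hcard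
    simp at hcard
    omega
  rw [if_pos hlt] at hcard hcov
  simp only [Finset.card_singleton] at hcard
  refine ⟨w, hw, hwD, hlt, hT0t, by omega, fun hmem => ?_⟩
  have : usedLt (W.erase w) M T0 ∪ {(M w).2} = usedLt (W.erase w) M T0 := by
    rw [Finset.union_eq_left]
    simpa using hmem
  rw [this] at hcov
  have := hforced.trans (Finset.card_le_card hcov)
  omega

/-- a later extra message does not matter -/
lemma phi_erase [DecidableEq V] {t : ℝ} {o : ZMod 4} {W : Finset V} {M : V → Msg} {u : V}
    (h : phiT t (W.erase u) M < (M u).1) :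
    phi t o W M = phi t o (W.erase u) M := by
  have key : ∀ s, s < (M u).1 → usedLe W M s = usedLe (W.erase u) M s := by
    intro s hs
    ext c
    simp only [mem_usedLe, Finset.mem_erase]
    constructor
    · rintro ⟨w, hw, h1, h2⟩
      refine ⟨w, ⟨?_, hw⟩, h1, h2⟩
      rintro rfl
      linarith
    · rintro ⟨w, hw, h1, h2⟩
      exact ⟨w, hw.2, h1, h2⟩
  have keyLt : ∀ s, s ≤ (M u).1 → usedLt W M s = usedLt (W.erase u) M s := by
    intro s hs
    ext c
    simp only [mem_usedLt, Finset.mem_erase]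
    constructor
    · rintro ⟨w, hw, h1, h2⟩
      refine ⟨w, ⟨?_, hw⟩, h1, h2⟩
      rintro rfl
      linarith
    · rintro ⟨w, hw, h1, h2⟩
      exact ⟨w, hw.2, h1, h2⟩
  have h1 : phiT t (W.erase u) M ≤ phiT t W M := by
    have := le_phiT.1 (le_refl (phiT t (W.erase u) M))
    rw [le_phiT, keyLt _ h.le]
    exact this
  have h2 : phiT t W M ≤ phiT t (W.erase u) M := by
    by_contra hc
    push Not at hc
    rcases lt_or_eq_of_le (phiT_le t (W.erase u) M) with h3 | h3
    · have h4 := phiT_forced h3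
      rw [← key _ h] at h4
      have h5 := (le_phiT.1 (le_refl (phiT t W M))).2
      have := Finset.card_le_card (usedLe_sub_usedLt W M hc)
      omega
    · have := phiT_le t W M
      linarith
  have h3 := le_antisymm h2 h1
  rw [phi, phi, h3, key _ h]

/-- an earlier message is taken into account -/
lemma phi_ne [DecidableEq V] {t : ℝ} {o : ZMod 4} {W : Finset V} {M : V → Msg} {u : V} (hu : u ∈ W)
    (h : (M u).1 < phiT t (W.erase u) M)
    (hinj : ∀ a ∈ W, ∀ b ∈ W, (M a).1 = (M b).1 → a = b) :
    (phi t o W M).2 ≠ (M u).2 := by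
  have h1 : (M u).1 ≤ phiT t W M := by
    have h0 := le_phiT.1 h.le
    rw [le_phiT]
    refine ⟨h0.1, ?_⟩
    have : usedLt W M (M u).1 = usedLt (W.erase u) M (M u).1 := by
      ext c
      simp only [mem_usedLt, Finset.mem_erase]
      constructor
      · rintro ⟨w, hw, h1, h2⟩
        refine ⟨w, ⟨?_, hw⟩, h1, h2⟩
        rintro rfl
        linarith
      · rintro ⟨w, hw, h1, h2⟩
        exact ⟨w, hw.2, h1, h2⟩
    rw [this]
    exact h0.2
  have hmem : (M u).2 ∈ usedLe W M (phiT t W M) := mem_usedLe.2 ⟨u, hu, h1, rfl⟩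
  have hcard : (usedLe W M (phiT t W M)).card ≤ 3 := by
    have h2 := (le_phiT.1 (le_refl (phiT t W M))).2
    by_cases hex : ∃ a ∈ W, (M a).1 = phiT t W M
    · obtain ⟨a, ha, hae⟩ := hex
      have : usedLe W M (phiT t W M) ⊆ usedLt W M (phiT t W M) ∪ {(M a).2} := by
        intro c hc
        rw [mem_usedLe] at hc
        obtain ⟨b, hb, hb1, rfl⟩ := hc
        rw [Finset.mem_union]
        rcases lt_or_eq_of_le hb1 with h3 | h3
        · exact Or.inl (mem_usedLt.2 ⟨b, hb, h3, rfl⟩)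
        · right
          rw [hinj b hb a ha (h3.trans hae.symm)]
          simp
      have h3 := (Finset.card_le_card this).trans (Finset.card_union_le _ _)
      simp at h3
      omega
    · have : usedLe W M (phiT t W M) ⊆ usedLt W M (phiT t W M) := by
        intro c hc
        rw [mem_usedLe] at hc
        obtain ⟨b, hb, hb1, rfl⟩ := hc
        refine mem_usedLt.2 ⟨b, hb, lt_of_le_of_ne hb1 fun e => hex ⟨b, hb, e⟩, rfl⟩
      have := Finset.card_le_card this
      omega
  intro e
  have := pick_notMem o _ hcard
  rw [← e] at hmem
  exact this hmem

lemma phi_congr {t : ℝ} {o : ZMod 4} {W : Finset V} {M M' : V → Msg} (h : ∀ w ∈ W, M w = M' w) :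
    phi t o W M = phi t o W M' :=
  phi_agree (T1 := phiT t W M + 1) (fun w hw => Or.inl (h w hw)) (by linarith)

lemma used_map {V' : Type} (e : V ↪ V') (W : Finset V) (M : V' → Msg) (T : ℝ) :
    usedLe (W.map e) M T = usedLe W (fun v => M (e v)) T := by
  ext c
  simp [mem_usedLe]

lemma phi_map {V' : Type} (e : V ↪ V') (t : ℝ) (o : ZMod 4) (W : Finset V) (M : V' → Msg) :
    phi t o (W.map e) M = phi t o W (fun v => M (e v)) := by
  have : phiT t (W.map e) M = phiT t W (fun v => M (e v)) := by
    unfold phiT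
    rw [Finset.fold_map]
    simp only [used_map]
    rfl
  rw [phi, phi, this, used_map]

lemma usedLe_shift (W : Finset V) (M : V → Msg) (T : ℝ) :
    usedLe W (fun w => ((M w).1, (M w).2 + 1)) T = (usedLe W M T).image (fun c => c + 1) := by
  ext c
  simp only [mem_usedLe, Finset.mem_image]
  constructor
  · rintro ⟨w, hw, h1, rfl⟩
    exact ⟨_, ⟨w, hw, h1, rfl⟩, rfl⟩
  · rintro ⟨_, ⟨w, hw, h1, rfl⟩, rfl⟩
    exact ⟨w, hw, h1, rfl⟩

lemma phi_shift (t : ℝ) (o : ZMod 4) (W : Finset V) (M : V → Msg) :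
    phi t (o + 1) W (fun w => ((M w).1, (M w).2 + 1)) =
      ((phi t o W M).1, (phi t o W M).2 + 1) := by
  have hc : ∀ T, (usedLe W (fun w => ((M w).1, (M w).2 + 1)) T).card = (usedLe W M T).card := by
    intro T
    rw [usedLe_shift, Finset.card_image_of_injective _ (add_left_injective 1)]
  have : phiT t W (fun w => ((M w).1, (M w).2 + 1)) = phiT t W M := by
    unfold phiT
    simp only [hc]
  rw [phi, this, usedLe_shift, pick_shift]
  rfl

end det
end T6
open MeasureTheory

namespace T6

noncomputable def hh (q : ℝ) : ℝ := 6 * (1 - q/2)^5 - 8 * (1 - 3*q/4)^5 + 3 * (1 - q)^5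
noncomputable def gg (q : ℝ) : ℝ := (1 - q/2)^4 - 2 * (1 - 3*q/4)^4 + (1 - q)^4

lemma gg_nonneg (q : ℝ) : 0 ≤ gg q := by
  have : gg q = 12 * (1 - 3*q/4)^2 * (q/4)^2 + 2 * (q/4)^4 := by unfold gg; ring
  rw [this]; positivity

lemma hh_deriv (q : ℝ) : HasDerivAt hh (-(15 * gg q)) q := by
  have h2 : HasDerivAt (fun q : ℝ => 1 - q/2) (-(1/2)) q := by
    simpa using ((hasDerivAt_id q).div_const 2).const_sub 1
  have h1 : HasDerivAt (fun q : ℝ => 1 - 3*q/4) (-(3/4)) q := by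
    simpa using (((hasDerivAt_id q).const_mul 3).div_const 4).const_sub 1
  have h0 : HasDerivAt (fun q : ℝ => 1 - q) (-1) q := by
    simpa using (hasDerivAt_id q).const_sub 1
  have := (((h2.pow 5).const_mul 6).sub ((h1.pow 5).const_mul 8)).add ((h0.pow 5).const_mul 3)
  refine this.congr_deriv ?_
  unfold gg
  push_cast
  ring

lemma hh_antitone : Antitone hh :=
  antitone_of_deriv_nonpos (fun q => (hh_deriv q).differentiableAt)
    (fun q => by rw [(hh_deriv q).deriv]; have := gg_nonneg q; linarith)

lemma hh_pos {q : ℝ} (h : q ≤ 1) : 0 < hh q := by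
  refine lt_of_lt_of_le ?_ (hh_antitone h)
  norm_num [hh]

lemma hh_le {q : ℝ} (h : 0 ≤ q) : hh q ≤ 1 := by
  refine (hh_antitone h).trans ?_
  norm_num [hh]

lemma hh_key {q : ℝ} (h0 : 0 ≤ q) (h1 : q ≤ 1) : 15 * (1 - q) * gg q ≤ 4/5 * hh q := by
  have e : ∃ r : ℝ, r = 1 - q := ⟨_, rfl⟩
  obtain ⟨r, hr⟩ := e
  have hr0 : 0 ≤ r := by linarith
  have : 4/5 * hh q - 15 * (1 - q) * gg q =
    4/5 - 45/4 * q^2 + 201/8*q^3 - 2553/128*q^4 + 693/128*q^5 := by unfold hh gg; ring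
  have key : 0 ≤ 4/5 - 45/4 * q^2 + 201/8*q^3 - 2553/128*q^4 + 693/128*q^5 := by
    have e : 4/5 - 45/4 * q^2 + 201/8*q^3 - 2553/128*q^4 + 693/128*q^5 =
        (q - 31/50)^2 * (16522851/8000000*(q^0*(1-q)^3) + 25664757/2000000*(q^1*(1-q)^2) + 49894503/8000000*(q^2*(1-q)^1) + 3535413/4000000*(q^3*(1-q)^0)) + (121540189/20000000000*(1-q) + 161215907/10000000000*q) := by ring
    rw [e, ← hr]
    positivity
  linarith

noncomputable def QQ : ℕ → ℝ → ℝ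
  | 0, s => 1 - s
  | n+1, s => 1 - s * hh (QQ n s)

lemma QQ_mem (n : ℕ) {s : ℝ} (h0 : 0 ≤ s) (h1 : s ≤ 1) : 0 ≤ QQ n s ∧ QQ n s ≤ 1 := by
  induction n with
  | zero => exact ⟨by simp [QQ, h1], by simp [QQ, h0]⟩
  | succ n ih =>
    have a := hh_pos ih.2
    have b := hh_le ih.1
    simp only [QQ]
    constructor <;> nlinarith

lemma QQ_mono (n : ℕ) {s : ℝ} (h0 : 0 ≤ s) (h1 : s ≤ 1) : QQ n s ≤ QQ (n+1) s := by
  induction n with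
  | zero =>
    have b := hh_le (QQ_mem 0 h0 h1).1
    simp only [QQ] at b ⊢
    nlinarith
  | succ n ih =>
    have := hh_antitone ih
    have h3 := mul_le_mul_of_nonneg_left this h0
    rw [QQ, QQ]
    linarith

lemma QQ_key (n : ℕ) {s : ℝ} (h0 : 0 ≤ s) (h1 : s ≤ 1) : s * (15 * gg (QQ n s)) ≤ 4/5 := by
  have a := QQ_mem n h0 h1
  have b := QQ_mono n h0 h1
  have c := hh_pos a.2
  have d := hh_key a.1 a.2
  have e := gg_nonneg (QQ n s)
  rw [QQ] at b
  by_contra hc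
  push Not at hc
  have h3 : s * hh (QQ n s) * (15 * gg (QQ n s)) ≤ (1 - QQ n s) * (15 * gg (QQ n s)) :=
    mul_le_mul_of_nonneg_right (by linarith) (by linarith)
  have h4 := mul_lt_mul_of_pos_right hc c
  nlinarith

lemma QQ_deriv (n : ℕ) : ∃ d : ℝ → ℝ, (∀ s, HasDerivAt (QQ n) (d s) s) ∧
    ∀ s, 0 ≤ s → s ≤ 1 → |d s| ≤ 5 := by
  induction n with
  | zero =>
    refine ⟨fun _ => -1, fun s => ?_, fun s _ _ => by norm_num⟩
    simpa [QQ] using (hasDerivAt_id s).const_sub 1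
  | succ n ih =>
    obtain ⟨d, hd, hb⟩ := ih
    refine ⟨fun s => -(1 * hh (QQ n s) + s * (-(15 * gg (QQ n s)) * d s)), fun s => ?_, ?_⟩
    · exact ((hasDerivAt_id s).mul ((hh_deriv (QQ n s)).comp s (hd s))).const_sub 1
    · intro s h0 h1
      have a := QQ_mem n h0 h1
      have k := QQ_key n h0 h1
      have k0 : 0 ≤ s * (15 * gg (QQ n s)) := mul_nonneg h0 (mul_nonneg (by norm_num) (gg_nonneg _))
      have h2 := hb s h0 h1
      have h3 : |s * (15 * gg (QQ n s)) * d s| ≤ 4 := by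
        rw [abs_mul, abs_of_nonneg k0]
        nlinarith [abs_nonneg (d s)]
      have h4 := hh_pos a.2
      have h5 := hh_le a.1
      rw [abs_le] at h3 ⊢
      constructor <;> linarith [h3.1, h3.2]

lemma QQ_lip (n : ℕ) {s t : ℝ} (hs : s ∈ Set.Icc (0:ℝ) 1) (ht : t ∈ Set.Icc (0:ℝ) 1) :
    |QQ n t - QQ n s| ≤ 5 * |t - s| := by
  obtain ⟨d, hd, hb⟩ := QQ_deriv n
  exact (convex_Icc (0:ℝ) 1).norm_image_sub_le_of_norm_hasDerivWithin_le
    (fun x _ => (hd x).hasDerivWithinAt) (fun x hx => hb x hx.1 hx.2) hs ht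

end T6
open MeasureTheory

namespace T6

noncomputable def tm (y : ℝ) : ℝ := Int.fract (4 * y)
noncomputable def oc (y : ℝ) : ZMod 4 := ((⌊4 * y⌋ : ℤ) : ZMod 4)

lemma tm_meas : Measurable tm := by unfold tm; fun_prop

lemma oc_meas : Measurable oc := by
  unfold oc
  have h1 : Measurable (fun y : ℝ => ⌊4 * y⌋) := by fun_prop
  exact (measurable_from_top (f := fun z : ℤ => (z : ZMod 4))).comp h1

section msg
variable {V : Type} (nb : V → Finset V)

open Classical in
noncomputable def msg (x : V → ℝ) : ℕ → V → V → Msg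
  | 0, _, v => (tm (x v), oc (x v))
  | n+1, u, v => phi (tm (x v)) (oc (x v)) ((nb v).erase u) (fun w => msg x n v w)

open Classical in
def Br : ℕ → V → V → Set V
  | 0, _, v => {v}
  | n+1, u, v => {v} ∪ ⋃ w ∈ (nb v).erase u, Br n v w

noncomputable def FF (x : V → ℝ) (n : ℕ) (v : V) : ZMod 4 :=
  (phi (tm (x v)) (oc (x v)) (nb v) (fun w => msg nb x n v w)).2

lemma self_mem_Br (n : ℕ) (u v : V) : v ∈ Br nb n u v := by
  cases n <;> simp [Br]

lemma msg_time (x : V → ℝ) (n : ℕ) (u v : V) :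
    ∃ y ∈ Br nb n u v, (msg nb x n u v).1 = tm (x y) := by
  classical
  induction n generalizing u v with
  | zero => exact ⟨v, self_mem_Br nb 0 u v, rfl⟩
  | succ n ih =>
    rcases phiT_mem (tm (x v)) ((nb v).erase u) (fun w => msg nb x n v w) with h | ⟨w, hw, h⟩
    · exact ⟨v, self_mem_Br nb _ u v, h⟩
    · obtain ⟨y, hy, h2⟩ := ih v w
      refine ⟨y, ?_, h.trans h2⟩
      rw [Br]
      refine Or.inr ?_
      simp only [Set.mem_iUnion]
      refine ⟨w, ?_, hy⟩
      convert hw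

lemma meas_finset {Ω : Type*} [MeasurableSpace Ω] {U : Ω → Finset (ZMod 4)}
    (h : ∀ c, MeasurableSet {ω | c ∈ U ω}) (P : Finset (ZMod 4) → Prop) :
    MeasurableSet {ω | P (U ω)} := by
  have : {ω | P (U ω)} = ⋃ S ∈ {S | P S}, ⋂ c, {ω | c ∈ U ω ↔ c ∈ S} := by
    ext ω
    simp only [Set.mem_ofPred_eq, Set.mem_iUnion, Set.mem_iInter]
    constructor
    · intro hP
      exact ⟨U ω, hP, fun c => Iff.rfl⟩
    · rintro ⟨S, hS, h2⟩
      have : U ω = S := Finset.ext h2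
      rwa [this]
  rw [this]
  refine MeasurableSet.biUnion (Set.to_countable _) fun S _ => MeasurableSet.iInter fun c => ?_
  by_cases hc : c ∈ S
  · simpa [hc] using h c
  · have h2 := (h c).compl
    simp only [hc, iff_false]
    exact h2

lemma meas_usedLt {Ω : Type*} [MeasurableSpace Ω] {W : Finset V} {M : Ω → V → Msg}
    (h : ∀ w ∈ W, Measurable fun ω => M ω w) (T : ℝ) (P : Finset (ZMod 4) → Prop) :
    MeasurableSet {ω | P (usedLt W (M ω) T)} := by
  refine meas_finset (fun c => ?_) P
  simp only [mem_usedLt]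
  have : {ω | ∃ w ∈ W, (M ω w).1 < T ∧ (M ω w).2 = c} =
      ⋃ w ∈ W, {ω | (M ω w).1 < T} ∩ {ω | (M ω w).2 = c} := by
    ext ω; simp [and_left_comm]
  rw [this]
  refine W.measurableSet_biUnion fun w hw => ?_
  exact (measurableSet_lt (h w hw).fst measurable_const).inter
    ((h w hw).snd (MeasurableSet.singleton c))

lemma meas_usedLe {Ω : Type*} [MeasurableSpace Ω] {W : Finset V} {M : Ω → V → Msg}
    (h : ∀ w ∈ W, Measurable fun ω => M ω w) {T : Ω → ℝ} (hT : Measurable T)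
    (P : Finset (ZMod 4) → Prop) :
    MeasurableSet {ω | P (usedLe W (M ω) (T ω))} := by
  refine meas_finset (fun c => ?_) P
  simp only [mem_usedLe]
  have : {ω | ∃ w ∈ W, (M ω w).1 ≤ T ω ∧ (M ω w).2 = c} =
      ⋃ w ∈ W, {ω | (M ω w).1 ≤ T ω} ∩ {ω | (M ω w).2 = c} := by
    ext ω; simp [and_left_comm]
  rw [this]
  refine W.measurableSet_biUnion fun w hw => ?_
  exact (measurableSet_le (h w hw).fst hT).inter
    ((h w hw).snd (MeasurableSet.singleton c))

lemma meas_phi {Ω : Type*} [MeasurableSpace Ω] {W : Finset V} {M : Ω → V → Msg}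
    {t : Ω → ℝ} {o : Ω → ZMod 4} (ht : Measurable t) (ho : Measurable o)
    (h : ∀ w ∈ W, Measurable fun ω => M ω w) :
    Measurable fun ω => phi (t ω) (o ω) W (M ω) := by
  have h1 : Measurable fun ω => phiT (t ω) W (M ω) := by
    refine measurable_of_Ici fun T => ?_
    have : (fun ω => phiT (t ω) W (M ω)) ⁻¹' Set.Ici T =
        {ω | T ≤ t ω} ∩ {ω | (usedLt W (M ω) T).card ≤ 2} := by
      ext ω
      simp [le_phiT]
    rw [this]
    exact (measurableSet_le measurable_const ht).inter (meas_usedLt h T (fun U => U.card ≤ 2))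
  refine h1.prodMk ?_
  refine measurable_to_countable' fun c => ?_
  have : (fun ω => pick (o ω) (usedLe W (M ω) (phiT (t ω) W (M ω)))) ⁻¹' {c} =
      ⋃ a : ZMod 4, {ω | o ω = a} ∩ {ω | pick a (usedLe W (M ω) (phiT (t ω) W (M ω))) = c} := by
    ext ω; simp
  rw [this]
  refine MeasurableSet.iUnion fun a => ?_
  exact (ho (MeasurableSet.singleton a)).inter (meas_usedLe h h1 (fun U => pick a U = c))

lemma meas_msg {Ω : Type*} [MeasurableSpace Ω] {X : Ω → V → ℝ} (n : ℕ) (u v : V)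
    (h : ∀ y ∈ Br nb n u v, Measurable fun ω => X ω y) :
    Measurable fun ω => msg nb (X ω) n u v := by
  classical
  induction n generalizing u v with
  | zero =>
    have := h v (self_mem_Br nb 0 u v)
    exact (tm_meas.comp this).prodMk (oc_meas.comp this)
  | succ n ih =>
    have := h v (self_mem_Br nb _ u v)
    refine meas_phi (tm_meas.comp this) (oc_meas.comp this) fun w hw => ih v w fun y hy => h y ?_
    rw [Br]
    refine Or.inr ?_
    simp only [Set.mem_iUnion]
    exact ⟨w, hw, hy⟩

lemma Br_sub {n : ℕ} {u v w : V} (hw : w ∈ nb v) (hu : w ≠ u) : Br nb n v w ⊆ Br nb (n+1) u v := by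
  classical
  intro y hy
  rw [Br]
  refine Or.inr ?_
  simp only [Set.mem_iUnion]
  exact ⟨w, Finset.mem_erase.2 ⟨hu, hw⟩, hy⟩

variable {nb} {G : SimpleGraph V} (hG : G.IsAcyclic) (hnb : ∀ v w, w ∈ nb v ↔ G.Adj v w)

section
include hG hnb

lemma Br_path {n : ℕ} {u v y : V} (huv : G.Adj u v) (hy : y ∈ Br nb n u v) :
    ∃ p : G.Walk v y, p.IsPath ∧ u ∉ p.support := by
  classical
  induction n generalizing u v with
  | zero =>
    simp only [Br, Set.mem_singleton_iff] at hy
    subst hy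
    exact ⟨.nil, by simp, by simpa using huv.ne⟩
  | succ n ih =>
    rw [Br] at hy
    rcases hy with hy | hy
    · simp only [Set.mem_singleton_iff] at hy
      subst hy
      exact ⟨.nil, by simp, by simpa using huv.ne⟩
    simp only [Set.mem_iUnion, Finset.mem_erase, hnb] at hy
    obtain ⟨w, ⟨hwu, hvw⟩, hy⟩ := hy
    obtain ⟨p, hp, hvp⟩ := ih hvw hy
    refine ⟨.cons hvw p, ?_, ?_⟩
    · rw [SimpleGraph.Walk.cons_isPath_iff]
      exact ⟨hp, hvp⟩
    · rw [SimpleGraph.Walk.support_cons, List.mem_cons, not_or]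
      refine ⟨huv.ne, fun hu => ?_⟩
      have h1 := hp.takeUntil hu
      have h2 : (SimpleGraph.Walk.cons hvw.symm (.cons huv.symm .nil)).IsPath := by
        simp [SimpleGraph.Walk.cons_isPath_iff, hvw.ne.symm, huv.ne.symm, hwu]
      have h3 := congrArg Subtype.val (hG.path_unique ⟨_, h1⟩ ⟨_, h2⟩)
      simp only at h3
      have h4 : v ∈ (p.takeUntil u hu).support := by rw [h3]; simp
      exact hvp (p.support_takeUntil_subset_support hu h4)

lemma Br_disj {n k : ℕ} {v w w' : V} (hw : G.Adj v w) (hw' : G.Adj v w') (hne : w ≠ w') :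
    Disjoint (Br nb n v w) (Br nb k v w') := by
  rw [Set.disjoint_left]
  intro y hy hy'
  obtain ⟨p, hp, hv⟩ := Br_path hG hnb hw hy
  obtain ⟨p', hp', hv'⟩ := Br_path hG hnb hw' hy'
  have h1 : (SimpleGraph.Walk.cons hw p).IsPath := by
    rw [SimpleGraph.Walk.cons_isPath_iff]; exact ⟨hp, hv⟩
  have h2 : (SimpleGraph.Walk.cons hw' p').IsPath := by
    rw [SimpleGraph.Walk.cons_isPath_iff]; exact ⟨hp', hv'⟩
  have h3 := congrArg (fun q => q.1.getVert 1) (hG.path_unique ⟨_, h1⟩ ⟨_, h2⟩)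
  simp at h3
  exact hne h3

lemma notMem_Br {n : ℕ} {v w : V} (hw : G.Adj v w) : v ∉ Br nb n v w := by
  intro hy
  obtain ⟨p, hp, hv⟩ := Br_path hG hnb hw hy
  exact hv p.end_mem_support

lemma Br_disj' {n k : ℕ} {u v : V} (h : G.Adj u v) :
    Disjoint (Br nb n u v) (Br nb k v u) := by
  rw [Set.disjoint_left]
  intro y hy hy'
  obtain ⟨p, hp, hv⟩ := Br_path hG hnb h hy
  obtain ⟨p', hp', hv'⟩ := Br_path hG hnb h.symm hy'
  have h1 : (SimpleGraph.Walk.cons h p).IsPath := by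
    rw [SimpleGraph.Walk.cons_isPath_iff]; exact ⟨hp, hv⟩
  have h3 := congrArg Subtype.val (hG.path_unique ⟨_, h1⟩ ⟨_, hp'⟩)
  simp only at h3
  apply hv'
  rw [← h3]
  simp

end

include hnb in
lemma nb_map (φ : G ≃g G) (v : V) : nb v = (nb (φ.symm v)).map φ.toEmbedding.toEmbedding := by
  ext w
  simp only [Finset.mem_map, hnb]
  constructor
  · intro h
    exact ⟨φ.symm w, φ.symm.map_adj_iff.2 h, by simp⟩
  · rintro ⟨a, ha, rfl⟩
    have := φ.map_adj_iff.2 ha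
    simpa using this

open Classical in
include hnb in
lemma msg_equiv (φ : G ≃g G) (x : V → ℝ) (n : ℕ) (u v : V) :
    msg nb (fun u => x (φ.symm u)) n u v = msg nb x n (φ.symm u) (φ.symm v) := by
  induction n generalizing u v with
  | zero => rfl
  | succ n ih =>
    rw [msg, msg]
    have : (nb v).erase u =
        ((nb (φ.symm v)).erase (φ.symm u)).map φ.toEmbedding.toEmbedding := by
      rw [nb_map hnb φ v, Finset.map_erase]
      congr 1
      simp
    rw [this, phi_map]
    refine phi_congr fun w _ => ?_
    rw [ih]
    simp

include hnb in
lemma FF_equiv (φ : G ≃g G) (x : V → ℝ) (n : ℕ) (v : V) :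
    FF nb (fun u => x (φ.symm u)) n v = FF nb x n (φ.symm v) := by
  rw [FF, FF, nb_map hnb φ v, phi_map]
  congr 1
  refine phi_congr fun w _ => ?_
  rw [msg_equiv hnb]
  simp

end msg
end T6
open MeasureTheory

namespace T6

noncomputable abbrev nu : Measure ℝ := volume.restrict (Set.Icc (0:ℝ) 1)

instance nu_prob : IsProbabilityMeasure nu := ⟨by simp⟩

lemma nu_eq : nu = volume.restrict (Set.Ico (0:ℝ) 1) :=
  (Measure.restrict_congr_set Ico_ae_eq_Icc).symm

lemma nu_tm {T : ℝ} (h0 : 0 ≤ T) (h1 : T ≤ 1) : nu {y | tm y < T} = ENNReal.ofReal T := by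
  have hm : MeasurableSet {y | tm y < T} := measurableSet_lt tm_meas measurable_const
  rw [nu_eq, Measure.restrict_apply hm]
  have : {y | tm y < T} ∩ Set.Ico 0 1 =
      ⋃ k ∈ Finset.range 4, Set.Ico ((k:ℝ)/4) ((k:ℝ)/4 + T/4) := by
    ext y
    simp only [Set.mem_inter_iff, Set.mem_ofPred_eq, Set.mem_Ico, Set.mem_iUnion,
      Finset.mem_range, exists_prop, tm]
    constructor
    · rintro ⟨h2, h3, h4⟩
      have hf : 0 ≤ ⌊4 * y⌋ := Int.floor_nonneg.2 (by linarith)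
      have hf2 : ⌊4 * y⌋ < 4 := Int.floor_lt.2 (by push_cast; linarith)
      have e := Int.floor_add_fract (4 * y)
      have e2 := Int.fract_nonneg (4 * y)
      obtain ⟨k, hk⟩ := Int.eq_ofNat_of_zero_le hf
      have hk' : ((⌊4 * y⌋ : ℤ) : ℝ) = k := by rw [hk]; simp
      rw [hk'] at e
      exact ⟨k, by omega, by linarith, by linarith⟩
    · rintro ⟨k, hk, h2, h3⟩
      have hk0 : (0:ℝ) ≤ k := Nat.cast_nonneg k
      have hk3 : (k:ℝ) ≤ 3 := by exact_mod_cast (by omega : k ≤ 3)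
      have : ⌊4 * y⌋ = (k:ℤ) := by
        rw [Int.floor_eq_iff]; push_cast; constructor <;> linarith
      refine ⟨?_, by linarith, by linarith⟩
      rw [Int.fract, this]; push_cast; linarith
  rw [this, measure_biUnion_finset]
  · simp only [Real.volume_Ico, add_sub_cancel_left, Finset.sum_const, Finset.card_range]
    rw [← ENNReal.ofReal_nsmul]
    congr 1
    simp; ring
  · intro i _ j _ hij
    simp only [Function.onFun]
    rw [Set.disjoint_left]
    rintro y ⟨a, b⟩ ⟨c, d⟩
    apply hij
    have h2 : (i:ℝ) < j + 1 := by linarith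
    have h3 : (j:ℝ) < i + 1 := by linarith
    have h4 : i < j + 1 := by exact_mod_cast h2
    have h5 : j < i + 1 := by exact_mod_cast h3
    omega
  · intro i _
    exact measurableSet_Ico

noncomputable def sh (y : ℝ) : ℝ := Int.fract (y + 1/4)

lemma sh_meas : Measurable sh := by unfold sh; fun_prop

lemma tm_sh (y : ℝ) : tm (sh y) = tm y := by
  unfold tm sh
  have : 4 * Int.fract (y + 1/4) = 4 * y + ((1 - 4 * ⌊y + 1/4⌋ : ℤ) : ℝ) := by
    rw [Int.fract]; push_cast; ring
  rw [this, Int.fract_add_intCast]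

lemma oc_sh (y : ℝ) : oc (sh y) = oc y + 1 := by
  unfold oc sh
  have : 4 * Int.fract (y + 1/4) = 4 * y + ((1 - 4 * ⌊y + 1/4⌋ : ℤ) : ℝ) := by
    rw [Int.fract]; push_cast; ring
  rw [this, Int.floor_add_intCast]
  have h4 : (4 : ZMod 4) = 0 := by decide
  push_cast
  rw [h4]; ring

lemma sh_map : nu.map sh = nu := by
  have hu : Set.Ico (0:ℝ) 1 = Set.Ico 0 (3/4) ∪ Set.Ico (3/4) 1 := by
    rw [Set.Ico_union_Ico_eq_Ico] <;> norm_num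
  have hu' : Set.Ico (0:ℝ) 1 = Set.Ico (1/4) 1 ∪ Set.Ico 0 (1/4) := by
    rw [Set.union_comm, Set.Ico_union_Ico_eq_Ico] <;> norm_num
  have hd : Disjoint (Set.Ico (0:ℝ) (3/4)) (Set.Ico (3/4) 1) := by
    rw [Set.disjoint_left]; rintro y ⟨a, b⟩ ⟨c, d⟩; linarith
  have hd' : Disjoint (Set.Ico (1/4:ℝ) 1) (Set.Ico 0 (1/4)) := by
    rw [Set.disjoint_left]; rintro y ⟨a, b⟩ ⟨c, d⟩; linarith
  have h1 : (volume.restrict (Set.Ico (0:ℝ) (3/4))).map sh = volume.restrict (Set.Ico (1/4) 1) := by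
    have := ((measurePreserving_add_right (volume : Measure ℝ) (1/4)).restrict_preimage
      (measurableSet_Ico : MeasurableSet (Set.Ico (1/4:ℝ) 1))).map_eq
    rw [← this]
    have e : (fun x : ℝ => x + 1/4) ⁻¹' Set.Ico (1/4) 1 = Set.Ico 0 (3/4) := by
      ext y; simp only [Set.mem_preimage, Set.mem_Ico]; constructor <;> rintro ⟨a, b⟩ <;>
        constructor <;> linarith
    rw [e]
    refine Measure.map_congr ?_
    refine (ae_restrict_iff' measurableSet_Ico).2 (Filter.Eventually.of_forall fun y hy => ?_)
    exact Int.fract_eq_self.2 ⟨by linarith [hy.1], by linarith [hy.2]⟩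
  have h2 : (volume.restrict (Set.Ico (3/4:ℝ) 1)).map sh = volume.restrict (Set.Ico 0 (1/4)) := by
    have := ((measurePreserving_add_right (volume : Measure ℝ) (-(3/4))).restrict_preimage
      (measurableSet_Ico : MeasurableSet (Set.Ico (0:ℝ) (1/4)))).map_eq
    rw [← this]
    have e : (fun x : ℝ => x + -(3/4)) ⁻¹' Set.Ico 0 (1/4) = Set.Ico (3/4) 1 := by
      ext y; simp only [Set.mem_preimage, Set.mem_Ico]; constructor <;> rintro ⟨a, b⟩ <;>
        constructor <;> linarith
    rw [e]
    refine Measure.map_congr ?_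
    refine (ae_restrict_iff' measurableSet_Ico).2 (Filter.Eventually.of_forall fun y hy => ?_)
    refine Int.fract_eq_iff.2 ⟨by linarith [hy.1], by linarith [hy.2], 1, ?_⟩
    push_cast; ring
  rw [nu_eq]
  conv_lhs => rw [hu, Measure.restrict_union hd measurableSet_Ico]
  rw [Measure.map_add _ _ sh_meas, h1, h2, hu', Measure.restrict_union hd' measurableSet_Ico]

section prob
variable {V : Type}

variable (V) in
noncomputable abbrev PP : Measure (V → ℝ) := Measure.infinitePi (fun _ : V => nu)

lemma eq_PP (μ : Measure (V → ℝ))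
    (hμ : ∀ s : Finset V,
      Measure.map (fun (x : V → ℝ) (v : s) => x v) μ
        = Measure.pi (fun _ : s => volume.restrict (Set.Icc (0:ℝ) 1))) : μ = PP V := by
  have h1 : IsProjectiveLimit μ (fun I : Finset V => Measure.pi (fun _ : I => nu)) := hμ
  exact h1.unique (Measure.isProjectiveLimit_infinitePi (fun _ : V => nu))

/-- sigma-algebra generated by the coordinates in `B` -/
def sg (B : Set V) : MeasurableSpace (V → ℝ) :=
  ⨆ y ∈ B, MeasurableSpace.comap (fun x : V → ℝ => x y) inferInstance

lemma sg_mono {B C : Set V} (h : B ⊆ C) : sg B ≤ sg C :=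
  biSup_mono fun _ hy => h hy

lemma sg_le (B : Set V) : sg B ≤ (inferInstance : MeasurableSpace (V → ℝ)) :=
  iSup₂_le fun y _ => (measurable_pi_apply y).comap_le

lemma sg_coord {B : Set V} {y : V} (hy : y ∈ B) : Measurable[sg B] (fun x : V → ℝ => x y) := by
  refine Measurable.mono (comap_measurable _) ?_ le_rfl
  exact le_iSup₂_of_le y hy le_rfl

lemma indep2 {B C : Set V} (hBC : Disjoint B C) {E F : Set (V → ℝ)}
    (hE : MeasurableSet[sg B] E) (hF : MeasurableSet[sg C] F) :
    (PP V).real (E ∩ F) = (PP V).real E * (PP V).real F := by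
  have h := ProbabilityTheory.iIndepFun_infinitePi (P := fun _ : V => nu)
    (X := fun _ : V => fun y : ℝ => y) (fun _ => measurable_id)
  have h2 := ProbabilityTheory.indep_iSup_of_disjoint
    (fun y => (measurable_pi_apply y).comap_le) h hBC
  have h3 := (ProbabilityTheory.Indep_iff _ _ _).1 h2 E F hE hF
  rw [measureReal_def, h3, ENNReal.toReal_mul]
  rfl

lemma indepN {ι : Type*} (I : Finset ι) (B : ι → Set V) (E : ι → Set (V → ℝ))
    (hB : ∀ i ∈ I, ∀ j ∈ I, i ≠ j → Disjoint (B i) (B j))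
    (hE : ∀ i ∈ I, MeasurableSet[sg (B i)] (E i)) :
    (PP V).real (⋂ i ∈ I, E i) = ∏ i ∈ I, (PP V).real (E i) := by
  classical
  induction I using Finset.induction_on with
  | empty => simp
  | insert i I hi ih =>
    rw [Finset.set_biInter_insert, Finset.prod_insert hi]
    rw [indep2 (B := B i) (C := ⋃ j ∈ I, B j) _ (hE i (Finset.mem_insert_self i I)) _]
    · rw [ih]
      · exact fun a ha b hb => hB a (Finset.mem_insert_of_mem ha) b (Finset.mem_insert_of_mem hb)
      · exact fun a ha => hE a (Finset.mem_insert_of_mem ha)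
    · simp only [Set.disjoint_iUnion_right]
      intro j hj
      refine hB i (Finset.mem_insert_self i I) j (Finset.mem_insert_of_mem hj) ?_
      rintro rfl
      exact hi hj
    · refine @Finset.measurableSet_biInter _ _ (sg (⋃ j ∈ I, B j)) _ I fun j hj => ?_
      exact sg_mono (Set.subset_biUnion_of_mem (u := fun j => B j) hj) _
        (hE j (Finset.mem_insert_of_mem hj))

lemma PP_tm (v : V) {T : ℝ} (h0 : 0 ≤ T) (h1 : T ≤ 1) : (PP V).real {x | tm (x v) < T} = T := by
  have hm : MeasurableSet {y | tm y < T} := measurableSet_lt tm_meas measurable_const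
  have := (measurePreserving_eval_infinitePi (fun _ : V => nu) v).measure_preimage
    hm.nullMeasurableSet
  rw [nu_tm h0 h1] at this
  rw [measureReal_def]
  change ((PP V) (Function.eval v ⁻¹' {y | tm y < T})).toReal = T
  rw [this, ENNReal.toReal_ofReal h0]

lemma PP_inj [Countable V] : ∀ᵐ x ∂(PP V), ∀ u v : V, tm (x u) = tm (x v) → u = v := by
  rw [ae_all_iff]; intro u
  rw [ae_all_iff]; intro v
  by_cases huv : u = v
  · simp [huv]
  simp only [huv, imp_false]
  have hmap := Measure.infinitePi_map_eval_prod (P := fun _ : V => nu) huv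
  have hs : MeasurableSet {p : ℝ × ℝ | tm p.1 = tm p.2} :=
    measurableSet_eq_fun (tm_meas.comp measurable_fst) (tm_meas.comp measurable_snd)
  have h0 : (nu.prod nu) {p : ℝ × ℝ | tm p.1 = tm p.2} = 0 := by
    rw [Measure.measure_prod_null hs]
    refine Filter.Eventually.of_forall fun a => ?_
    refine Set.Countable.measure_zero ?_ _
    have : Prod.mk a ⁻¹' {p : ℝ × ℝ | tm p.1 = tm p.2} ⊆
        Set.range (fun z : ℤ => (tm a + z) / 4) := by
      intro b hb
      have hb' : tm a = Int.fract (4 * b) := hb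
      refine ⟨⌊4 * b⌋, ?_⟩
      simp only
      rw [hb']
      have := Int.fract_add_floor (4 * b)
      linarith
    exact (Set.countable_range _).mono this
  rw [← hmap, Measure.map_apply (by fun_prop) hs] at h0
  rw [ae_iff]
  simpa using h0

lemma sh_PP : MeasurePreserving (fun (x : V → ℝ) v => sh (x v)) (PP V) (PP V) := by
  refine ⟨measurable_pi_lambda _ fun v => sh_meas.comp (measurable_pi_apply v), ?_⟩
  rw [Measure.infinitePi_map_pi (fun _ : V => nu) (fun _ => sh_meas)]
  simp_rw [sh_map]

end prob
end T6
open MeasureTheory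

namespace T6

def coef (k : ℕ) : ℤ := if k = 0 then 3 else if k = 1 then -2 else if k = 2 then 1 else 0

set_option maxRecDepth 10000 in
lemma coef_id1 : ∀ U : Finset (ZMod 4), (if U.card ≤ 2 then 1 else 0 : ℤ) =
    ∑ S ∈ (Finset.univ : Finset (ZMod 4)).powerset, if U ⊆ S then coef S.card else 0 := by
  decide

set_option maxRecDepth 10000 in
lemma coef_id2 : ∀ (c : ZMod 4) (U : Finset (ZMod 4)),
    (if U.card = 2 ∧ c ∉ U then 1 else 0 : ℤ) =
    ∑ S ∈ ((Finset.univ : Finset (ZMod 4)).erase c).powerset,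
      if U ⊆ S then coef S.card else 0 := by
  decide

lemma pcomb {Ω : Type*} [MeasurableSpace Ω] (μ : Measure Ω) [IsProbabilityMeasure μ]
    {U : Ω → Finset (ZMod 4)} (hU : ∀ P : Finset (ZMod 4) → Prop, MeasurableSet {ω | P (U ω)})
    (P : Finset (ZMod 4) → Prop) [DecidablePred P] (A : Finset (ZMod 4))
    (h : ∀ U : Finset (ZMod 4), (if P U then 1 else 0 : ℤ) =
      ∑ S ∈ A.powerset, if U ⊆ S then coef S.card else 0)
    (f : ℕ → ℝ) (hf : ∀ S : Finset (ZMod 4), μ.real {ω | U ω ⊆ S} = f S.card) :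
    μ.real {ω | P (U ω)} = ∑ k ∈ Finset.range (A.card + 1), (A.card.choose k) * (coef k * f k) := by
  have h1 : ∀ ω, ({ω | P (U ω)}.indicator (1 : Ω → ℝ)) ω =
      ∑ S ∈ A.powerset, (coef S.card : ℝ) * ({ω | U ω ⊆ S}.indicator (1 : Ω → ℝ)) ω := by
    intro ω
    have := congrArg (Int.cast : ℤ → ℝ) (h (U ω))
    push_cast at this
    simp only [Set.indicator_apply, Set.mem_ofPred_eq, Pi.one_apply, mul_ite, mul_one, mul_zero]
    exact this
  rw [← integral_indicator_one (hU P)]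
  simp_rw [h1]
  rw [integral_finsetSum]
  · simp_rw [integral_const_mul]
    have : ∀ S ∈ A.powerset, (coef S.card : ℝ) *
        ∫ ω, ({ω | U ω ⊆ S}.indicator (1 : Ω → ℝ)) ω ∂μ = (fun k => (coef k : ℝ) * f k) S.card := by
      intro S _
      rw [integral_indicator_one (hU fun U => U ⊆ S), hf]
    rw [Finset.sum_congr rfl this, Finset.sum_powerset_apply_card (fun k => (coef k : ℝ) * f k)]
    simp
  · intro S _
    refine Integrable.const_mul ?_ _
    exact (integrable_const (1:ℝ)).indicator (hU fun U => U ⊆ S)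

section law
variable {V : Type} (nb : V → Finset V)

def BB (u v : V) : Set V := ⋃ n, Br nb n u v

lemma msg_sg (n : ℕ) (u v : V) : Measurable[sg (BB nb u v)] (fun x => msg nb x n u v) := by
  refine @meas_msg V nb _ (sg (BB nb u v)) (fun x => x) n u v fun y hy => ?_
  exact sg_coord (Set.mem_iUnion.2 ⟨n, hy⟩)

lemma msg_m (n : ℕ) (u v : V) : Measurable (fun x => msg nb x n u v) :=
  (msg_sg nb n u v).mono (sg_le _) le_rfl

lemma msg_sh (x : V → ℝ) (n : ℕ) (u v : V) :
    msg nb (fun v => sh (x v)) n u v = ((msg nb x n u v).1, (msg nb x n u v).2 + 1) := by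
  induction n generalizing u v with
  | zero => simp [msg, tm_sh, oc_sh]
  | succ n ih =>
    simp only [msg, tm_sh, oc_sh, ih]
    exact phi_shift _ _ _ _

lemma sum_zmod4 (f : ZMod 4 → ℝ) : ∑ c, f c = f 0 + f 1 + f 2 + f 3 := by
  exact Fin.sum_univ_four f

lemma real_cut (E : Set (V → ℝ)) (hE : MeasurableSet E) (c : (V → ℝ) → ZMod 4) (hc : Measurable c)
    (A : Finset (ZMod 4)) :
    (PP V).real (E ∩ {x | c x ∈ A}) = ∑ a ∈ A, (PP V).real (E ∩ {x | c x = a}) := by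
  have : E ∩ {x | c x ∈ A} = ⋃ a ∈ A, E ∩ {x | c x = a} := by
    ext x; simp
  rw [this, measureReal_biUnion_finset]
  · intro a _ b _ hab
    simp only [Function.onFun]
    rw [Set.disjoint_left]
    rintro x ⟨_, h1⟩ ⟨_, h2⟩
    exact hab (h1.symm.trans h2)
  · intro a _
    exact hE.inter (hc (MeasurableSet.singleton a))

lemma col_unif (n : ℕ) (u v : V) (T : ℝ) (c : ZMod 4) :
    (PP V).real ({x | (msg nb x n u v).1 < T} ∩ {x | (msg nb x n u v).2 = c}) =
      (PP V).real {x | (msg nb x n u v).1 < T} / 4 := by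
  have hm := msg_m nb n u v
  have hE : MeasurableSet {x | (msg nb x n u v).1 < T} := measurableSet_lt hm.fst measurable_const
  have step : ∀ a : ZMod 4,
      (PP V).real ({x | (msg nb x n u v).1 < T} ∩ {x | (msg nb x n u v).2 = a + 1}) =
      (PP V).real ({x | (msg nb x n u v).1 < T} ∩ {x | (msg nb x n u v).2 = a}) := by
    intro a
    have h := (sh_PP (V := V)).measure_preimage
      (hE.inter (hm.snd (MeasurableSet.singleton (a + 1)))).nullMeasurableSet
    rw [measureReal_def, measureReal_def]
    congr 1
    refine Eq.trans h.symm ?_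
    congr 1
    ext x
    simp [msg_sh]
  have hs := real_cut _ hE _ hm.snd Finset.univ
  simp only [Finset.mem_univ] at hs
  have e : {x | (msg nb x n u v).1 < T} ∩ {x | True} = {x | (msg nb x n u v).1 < T} := by
    ext; simp
  rw [e, sum_zmod4] at hs
  have s0 := step 0
  have s1 := step 1
  have s2 := step 2
  have e1 : (0 : ZMod 4) + 1 = 1 := by decide
  have e2 : (1 : ZMod 4) + 1 = 2 := by decide
  have e3 : (2 : ZMod 4) + 1 = 3 := by decide
  rw [e1] at s0
  rw [e2] at s1
  rw [e3] at s2
  have h4 : c = 0 ∨ c = 1 ∨ c = 2 ∨ c = 3 := by revert c; decide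
  rcases h4 with rfl | rfl | rfl | rfl <;> linarith

variable {nb} {G : SimpleGraph V} (hG : G.IsAcyclic) (hnb : ∀ v w, w ∈ nb v ↔ G.Adj v w)
include hG hnb

lemma BB_disj {v w w' : V} (hw : G.Adj v w) (hw' : G.Adj v w') (hne : w ≠ w') :
    Disjoint (BB nb v w) (BB nb v w') := by
  simp only [BB, Set.disjoint_iUnion_left, Set.disjoint_iUnion_right]
  exact fun _ _ => Br_disj hG hnb hw hw' hne

lemma BB_disj0 {v w : V} (hw : G.Adj v w) : Disjoint {v} (BB nb v w) := by
  simp only [BB, Set.disjoint_iUnion_right, Set.disjoint_singleton_left]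
  exact fun _ => notMem_Br hG hnb hw

lemma cov {v : V} {W : Finset V} (hW : W ⊆ nb v) (n : ℕ) {T q : ℝ}
    (hq : ∀ w ∈ W, (PP V).real {x | (msg nb x n v w).1 < T} = q) (S : Finset (ZMod 4)) :
    (PP V).real {x | usedLt W (fun w => msg nb x n v w) T ⊆ S} =
      (1 - q * (4 - S.card) / 4) ^ W.card := by
  have e : {x | usedLt W (fun w => msg nb x n v w) T ⊆ S} =
      ⋂ w ∈ W, ({x | (msg nb x n v w).1 < T} ∩ {x | (msg nb x n v w).2 ∈ Sᶜ})ᶜ := by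
    ext x
    simp only [Set.mem_ofPred_eq, Finset.subset_iff, mem_usedLt, Set.mem_iInter,
      Set.mem_compl_iff, Set.mem_inter_iff, Finset.mem_compl]
    constructor
    · intro h w hw h2
      exact h2.2 (h ⟨w, hw, h2.1, rfl⟩)
    · rintro h c ⟨w, hw, h1, rfl⟩
      by_contra hc
      exact h w hw ⟨h1, hc⟩
  rw [e, indepN W (fun w => BB nb v w)]
  · rw [← Finset.prod_const]
    refine Finset.prod_congr rfl fun w hw => ?_
    have hm := msg_m nb n v w
    have hE : MeasurableSet {x | (msg nb x n v w).1 < T} := measurableSet_lt hm.fst measurable_const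
    have hE2 : MeasurableSet {x | (msg nb x n v w).2 ∈ Sᶜ} :=
      hm.snd (MeasurableSet.of_discrete (s := {c | c ∈ Sᶜ}))
    rw [probReal_compl_eq_one_sub (hE.inter hE2),
      real_cut _ hE _ hm.snd]
    simp_rw [col_unif, hq w hw]
    rw [Finset.sum_const, Finset.card_compl, nsmul_eq_mul, Nat.cast_sub (Finset.card_le_univ _)]
    simp only [ZMod.card]
    push_cast
    ring
  · exact fun a ha b hb hab => BB_disj hG hnb ((hnb _ _).1 (hW ha)) ((hnb _ _).1 (hW hb)) hab
  · intro w hw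
    have hm := msg_sg nb n v w
    refine MeasurableSet.compl (MeasurableSet.inter ?_ ?_)
    · exact hm.fst measurableSet_Iio
    · exact hm.snd (MeasurableSet.of_discrete (s := {c | c ∈ Sᶜ}))

lemma usedLt_sg {v : V} (W : Finset V) (n : ℕ) (T : ℝ) (P : Finset (ZMod 4) → Prop) :
    MeasurableSet[sg (⋃ w ∈ W, BB nb v w)] {x | P (usedLt W (fun w => msg nb x n v w) T)} := by
  refine @meas_usedLt V _ (sg (⋃ w ∈ W, BB nb v w)) W (fun x w => msg nb x n v w) ?_ T P
  intro w hw
  exact (msg_sg nb n v w).mono (sg_mono (Set.subset_biUnion_of_mem (u := fun j => BB nb v j) hw)) le_rfl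

lemma p_le2 {v : V} {W : Finset V} (hW : W ⊆ nb v) (hc : W.card = 5) (n : ℕ) {T q : ℝ}
    (hq : ∀ w ∈ W, (PP V).real {x | (msg nb x n v w).1 < T} = q) :
    (PP V).real {x | (usedLt W (fun w => msg nb x n v w) T).card ≤ 2} = hh q := by
  rw [pcomb (PP V) (fun P => sg_le _ _ (usedLt_sg hG hnb W n T P)) (fun U => U.card ≤ 2)
    Finset.univ coef_id1 (fun k => (1 - q * (4 - k) / 4) ^ W.card) (cov hG hnb hW n hq), hc]
  have : (Finset.univ : Finset (ZMod 4)).card = 4 := by decide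
  rw [this]
  simp [Finset.sum_range_succ, coef, Nat.choose]
  unfold hh
  ring

lemma p_eq2 {v : V} {W : Finset V} (hW : W ⊆ nb v) (hc : W.card = 4) (n : ℕ) {T q : ℝ}
    (hq : ∀ w ∈ W, (PP V).real {x | (msg nb x n v w).1 < T} = q) (c : ZMod 4) :
    (PP V).real {x | (usedLt W (fun w => msg nb x n v w) T).card = 2 ∧
      c ∉ usedLt W (fun w => msg nb x n v w) T} = 3 * gg q := by
  rw [pcomb (PP V) (fun P => sg_le _ _ (usedLt_sg hG hnb W n T P)) (fun U => U.card = 2 ∧ c ∉ U)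
    (Finset.univ.erase c) (coef_id2 c) (fun k => (1 - q * (4 - k) / 4) ^ W.card)
    (cov hG hnb hW n hq), hc]
  have : ((Finset.univ : Finset (ZMod 4)).erase c).card = 3 := by revert c; decide
  rw [this]
  simp [Finset.sum_range_succ, coef, Nat.choose]
  unfold gg
  ring

lemma t_sg (v : V) {A : Set ℝ} (hA : MeasurableSet A) :
    MeasurableSet[sg {v}] {x : V → ℝ | tm (x v) ∈ A} :=
  (tm_meas.comp (sg_coord (Set.mem_singleton v))) hA

open Classical in
theorem msg_law (hdeg : ∀ v, (nb v).card = 6) (n : ℕ) {u v : V} (huv : G.Adj u v) {T : ℝ}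
    (h0 : 0 ≤ T) (h1 : T ≤ 1) :
    (PP V).real {x | (msg nb x n u v).1 < T} = QQ n (1 - T) := by
  induction n generalizing u v with
  | zero =>
    simp only [msg, QQ]
    rw [PP_tm v h0 h1]; ring
  | succ n ih =>
    have hc : {x | (msg nb x (n+1) u v).1 < T} = ({x | tm (x v) ∈ Set.Ici T} ∩
        {x | (usedLt ((nb v).erase u) (fun w => msg nb x n v w) T).card ≤ 2})ᶜ := by
      ext x
      have := le_phiT (t := tm (x v)) (W := (nb v).erase u) (M := fun w => msg nb x n v w) (T := T)
      simp only [msg, phi, Set.mem_ofPred_eq, Set.mem_compl_iff, Set.mem_inter_iff, Set.mem_Ici]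
      rw [← not_le, this]
    have hA := t_sg hG hnb v (measurableSet_Ici (a := T))
    have hB := usedLt_sg hG hnb (v := v) ((nb v).erase u) n T (fun U => U.card ≤ 2)
    rw [hc, probReal_compl_eq_one_sub ((sg_le _ _ hA).inter (sg_le _ _ hB)), indep2 _ hA hB,
      p_le2 hG hnb (Finset.erase_subset _ _) _ n (q := QQ n (1 - T)), QQ]
    · congr 2
      have e : {x : V → ℝ | tm (x v) ∈ Set.Ici T} = {x | tm (x v) < T}ᶜ := by
        ext; simp
      rw [e, probReal_compl_eq_one_sub, PP_tm v h0 h1]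
      exact sg_le _ _ (t_sg hG hnb v measurableSet_Iio)
    · intro w hw
      exact ih ((hnb _ _).1 (Finset.mem_of_mem_erase hw))
    · rw [Finset.card_erase_of_mem ((hnb _ _).2 huv.symm), hdeg]
    · simp only [Set.disjoint_iUnion_right]
      intro w hw
      exact BB_disj0 hG hnb ((hnb _ _).1 (Finset.mem_of_mem_erase hw))

end law
end T6
open MeasureTheory

namespace T6

lemma exists_disc {N : ℝ} (hN : 0 < N) {m m' : Msg} (hne : m ≠ m') (h0 : 0 ≤ m.1) (h0' : 0 ≤ m'.1)
    {k : ℕ} (h : m.1 < k / N ∨ m'.1 < k / N) :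
    ∃ j < k, Disc (j / N) ((j + 1) / N) m m' := by
  have hmin : min m.1 m'.1 < k / N := min_lt_iff.2 h
  have hmin0 : 0 ≤ min m.1 m'.1 := le_min h0 h0'
  have h1 := Nat.floor_le (mul_nonneg hN.le hmin0)
  have h2 := Nat.lt_floor_add_one (N * min m.1 m'.1)
  have h3 : (⌊N * min m.1 m'.1⌋₊ : ℝ) / N ≤ min m.1 m'.1 := by
    rw [div_le_iff₀ hN]; linarith
  have h4 : min m.1 m'.1 < ((⌊N * min m.1 m'.1⌋₊ : ℝ) + 1) / N := by
    rw [lt_div_iff₀ hN]; linarith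
  refine ⟨⌊N * min m.1 m'.1⌋₊, ?_, hne, h3.trans (min_le_left _ _), h3.trans (min_le_right _ _),
    min_lt_iff.1 h4⟩
  have h5 : (⌊N * min m.1 m'.1⌋₊ : ℝ) / N < k / N := lt_of_le_of_lt h3 hmin
  have h6 := (div_lt_div_iff_of_pos_right hN).1 h5
  exact_mod_cast h6

section contr
variable {V : Type} (nb : V → Finset V)

lemma msg_time_mem (x : V → ℝ) (n : ℕ) (u v : V) :
    0 ≤ (msg nb x n u v).1 ∧ (msg nb x n u v).1 < 1 := by
  obtain ⟨y, _, h⟩ := msg_time nb x n u v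
  rw [h]
  exact ⟨Int.fract_nonneg _, Int.fract_lt_one _⟩

/-- number of windows -/
noncomputable abbrev NN : ℝ := 4100

def DD (k a b : ℕ) (u v : V) : Set (V → ℝ) :=
  {x | Disc (k / NN) ((k + 1) / NN) (msg nb x a u v) (msg nb x b u v)}

def EV (k a b : ℕ) (u v : V) : Set (V → ℝ) :=
  {x | x ∈ DD nb k a b u v ∧ (msg nb x a u v).1 < (k + 1) / NN}

lemma meas_ne {Ω : Type*} [MeasurableSpace Ω] {f g : Ω → Msg} (hf : Measurable f)
    (hg : Measurable g) : MeasurableSet {ω | f ω ≠ g ω} :=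
  (measurableSet_eq_fun hf hg).compl

lemma DD_meas (k a b : ℕ) (u v : V) : MeasurableSet[sg (BB nb u v)] (DD nb k a b u v) := by
  have ha := msg_sg nb a u v
  have hb := msg_sg nb b u v
  refine MeasurableSet.inter (@meas_ne _ (sg (BB nb u v)) _ _ ha hb) ?_
  refine MeasurableSet.inter (ha.fst measurableSet_Ici) ?_
  refine MeasurableSet.inter (hb.fst measurableSet_Ici) ?_
  exact MeasurableSet.union (ha.fst measurableSet_Iio) (hb.fst measurableSet_Iio)

lemma EV_meas (k a b : ℕ) (u v : V) : MeasurableSet[sg (BB nb u v)] (EV nb k a b u v) :=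
  (DD_meas nb k a b u v).inter ((msg_sg nb a u v).fst measurableSet_Iio)

lemma DD_sub (k a b : ℕ) (u v : V) : DD nb k a b u v ⊆ EV nb k a b u v ∪ EV nb k b a u v := by
  intro x hx
  rcases hx.2.2.2 with h | h
  · exact Or.inl ⟨hx, h⟩
  · exact Or.inr ⟨hx.symm, h⟩

lemma DD_le {k a b : ℕ} {u v : V} {e : ℝ} (h1 : (PP V).real (EV nb k a b u v) ≤ e)
    (h2 : (PP V).real (EV nb k b a u v) ≤ e) : (PP V).real (DD nb k a b u v) ≤ 2 * e := by
  have := (measureReal_mono (DD_sub nb k a b u v)).trans (measureReal_union_le (μ := PP V) _ _)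
  linarith

variable {nb} {G : SimpleGraph V} (hG : G.IsAcyclic) (hnb : ∀ v w, w ∈ nb v ↔ G.Adj v w)
  (hdeg : ∀ v, (nb v).card = 6)

lemma tm_window (v : V) {k : ℕ} (hk : k < 4100) :
    (PP V).real {x | tm (x v) ∈ Set.Ico (k / NN) ((k + 1) / NN)} = 1 / NN := by
  have hk' : (k:ℝ) + 1 ≤ 4100 := by exact_mod_cast hk
  have hk0 : (0:ℝ) ≤ k := Nat.cast_nonneg k
  have e : {x : V → ℝ | tm (x v) ∈ Set.Ico (k / NN) ((k + 1) / NN)} =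
      {x | tm (x v) < (k + 1) / NN} \ {x | tm (x v) < k / NN} := by
    ext x; simp [and_comm]
  rw [e, measureReal_sdiff, PP_tm, PP_tm]
  · ring
  · positivity
  · rw [div_le_one] <;> linarith
  · positivity
  · rw [div_le_one] <;> linarith
  · intro x hx
    simp only [Set.mem_ofPred_eq] at hx ⊢
    refine lt_of_lt_of_le hx ?_
    rw [div_le_div_iff_of_pos_right (by norm_num)]
    linarith
  · exact measurableSet_lt (tm_meas.comp (measurable_pi_apply v)) measurable_const

include hG hnb hdeg

lemma msg_window (n : ℕ) {u v : V} (huv : G.Adj u v) {k : ℕ} (hk : k < 4100) :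
    (PP V).real {x | (msg nb x n u v).1 ∈ Set.Ico (k / NN) ((k + 1) / NN)} ≤ 5 / NN := by
  have hk' : (k:ℝ) + 1 ≤ 4100 := by exact_mod_cast hk
  have hk0 : (0:ℝ) ≤ k := Nat.cast_nonneg k
  have i1 : (0:ℝ) ≤ k / NN := by positivity
  have i2 : k / NN ≤ 1 := by rw [div_le_one] <;> linarith
  have i3 : (0:ℝ) ≤ (k + 1) / NN := by positivity
  have i4 : (k + 1) / NN ≤ 1 := by rw [div_le_one] <;> linarith
  have e : {x : V → ℝ | (msg nb x n u v).1 ∈ Set.Ico (k / NN) ((k + 1) / NN)} =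
      {x | (msg nb x n u v).1 < (k + 1) / NN} \ {x | (msg nb x n u v).1 < k / NN} := by
    ext x; simp [and_comm]
  rw [e, measureReal_sdiff, msg_law hG hnb hdeg n huv i3 i4, msg_law hG hnb hdeg n huv i1 i2]
  · have := QQ_lip n (s := 1 - k / NN) (t := 1 - (k + 1) / NN) ⟨by linarith, by linarith⟩
      ⟨by linarith, by linarith⟩
    have h2 : |1 - (k + 1) / NN - (1 - k / NN)| = 1 / NN := by
      have : 1 - (k + 1) / NN - (1 - k / NN) = -(1 / NN) := by ring
      rw [this, abs_neg, abs_of_nonneg (by norm_num)]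
    rw [h2] at this
    have := (le_abs_self _).trans this
    linarith
  · intro x hx
    simp only [Set.mem_ofPred_eq] at hx ⊢
    refine lt_of_lt_of_le hx ?_
    rw [div_le_div_iff_of_pos_right (by norm_num)]
    linarith
  · exact measurableSet_lt (msg_m nb n u v).fst measurable_const

open Classical in
lemma step_w {u v w : V} (huv : G.Adj u v) (hw : w ∈ (nb v).erase u) {a b k : ℕ} (hk : k < 4100)
    {E : ℕ → ℝ}
    (h1 : ∀ j ≤ k, (PP V).real (EV nb j a b v w) ≤ E j)
    (h2 : ∀ j ≤ k, (PP V).real (EV nb j b a v w) ≤ E j) :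
    (PP V).real ((⋃ j ∈ Finset.range k, DD nb j a b v w) ∪
      ((DD nb k a b v w ∩ ({x | tm (x v) ∈ Set.Ico (k / NN) ((k + 1) / NN)} ∪
        ⋃ w' ∈ ((nb v).erase u).erase w,
          ({x | (msg nb x a v w').1 ∈ Set.Ico (k / NN) ((k + 1) / NN)} ∪
           {x | (msg nb x b v w').1 ∈ Set.Ico (k / NN) ((k + 1) / NN)}))) ∪
      ⋃ c ∈ (Finset.univ : Finset (ZMod 4)),
        ((EV nb k a b v w ∩ {x | (msg nb x a v w).2 = c}) ∩ ({x | tm (x v) ∈ Set.Ici (k / NN)} ∩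
         {x | (usedLt (((nb v).erase u).erase w) (fun w => msg nb x a v w) (k / NN)).card = 2 ∧
           c ∉ usedLt (((nb v).erase u).erase w) (fun w => msg nb x a v w) (k / NN)}))))
      ≤ 2 * ∑ j ∈ Finset.range k, E j + (82 / NN * E k + 4 / 25 * E k) := by
  have hk' : (k:ℝ) + 1 ≤ 4100 := by exact_mod_cast hk
  have hk0 : (0:ℝ) ≤ k := Nat.cast_nonneg k
  have i1 : (0:ℝ) ≤ k / NN := by positivity
  have i2 : k / NN ≤ 1 := by rw [div_le_one] <;> linarith
  have hEk : 0 ≤ E k := measureReal_nonneg.trans (h1 k le_rfl)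
  have hw' : w ∈ nb v := Finset.mem_of_mem_erase hw
  have hvw : G.Adj v w := (hnb _ _).1 hw'
  have hcard : (((nb v).erase u).erase w).card = 4 := by
    rw [Finset.card_erase_of_mem hw, Finset.card_erase_of_mem ((hnb _ _).2 huv.symm), hdeg]
  have hsub : ((nb v).erase u).erase w ⊆ nb v :=
    (Finset.erase_subset _ _).trans (Finset.erase_subset _ _)
  set W' := ((nb v).erase u).erase w with hW'
  have hwW : w ∉ W' := Finset.notMem_erase _ _
  have hadj : ∀ w' ∈ W', G.Adj v w' := fun w' h => (hnb _ _).1 (hsub h)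
  have dj1 : Disjoint (BB nb v w) ({v} ∪ ⋃ w' ∈ W', BB nb v w') := by
    rw [Set.disjoint_union_right]
    refine ⟨(BB_disj0 hG hnb hvw).symm, ?_⟩
    simp only [Set.disjoint_iUnion_right]
    intro w' h'
    refine BB_disj hG hnb hvw (hadj w' h') ?_
    rintro rfl
    exact hwW h'
  have dj2 : Disjoint {v} (⋃ w' ∈ W', BB nb v w') := by
    simp only [Set.disjoint_iUnion_right]
    exact fun w' h' => BB_disj0 hG hnb (hadj w' h')
  refine (measureReal_union_le _ _).trans (add_le_add ?_ ((measureReal_union_le _ _).trans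
    (add_le_add ?_ ?_)))
  · refine (measureReal_biUnion_finset_le _ _).trans ?_
    rw [Finset.mul_sum]
    refine Finset.sum_le_sum fun j hj => ?_
    have hj' := (Finset.mem_range.1 hj).le
    exact DD_le nb (h1 j hj') (h2 j hj')
  · rw [indep2 dj1 (DD_meas nb k a b v w)]
    · have hD := DD_le nb (h1 k le_rfl) (h2 k le_rfl)
      have hX : (PP V).real ({x | tm (x v) ∈ Set.Ico (k / NN) ((k + 1) / NN)} ∪
        ⋃ w' ∈ W',
          ({x | (msg nb x a v w').1 ∈ Set.Ico (k / NN) ((k + 1) / NN)} ∪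
           {x | (msg nb x b v w').1 ∈ Set.Ico (k / NN) ((k + 1) / NN)})) ≤ 41 / NN := by
        refine (measureReal_union_le _ _).trans ?_
        rw [tm_window v hk]
        have : (PP V).real (⋃ w' ∈ W',
          ({x | (msg nb x a v w').1 ∈ Set.Ico (k / NN) ((k + 1) / NN)} ∪
           {x | (msg nb x b v w').1 ∈ Set.Ico (k / NN) ((k + 1) / NN)})) ≤
            ∑ w' ∈ W', (10 / NN) := by
          refine (measureReal_biUnion_finset_le _ _).trans (Finset.sum_le_sum fun w' h' => ?_)
          refine (measureReal_union_le _ _).trans ?_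
          have p1 := msg_window hG hnb hdeg a (hadj w' h') hk
          have p2 := msg_window hG hnb hdeg b (hadj w' h') hk
          refine (add_le_add p1 p2).trans ?_
          norm_num
        rw [Finset.sum_const, hcard] at this
        refine (add_le_add le_rfl this).trans ?_
        norm_num
      calc _ ≤ (2 * E k) * (41 / NN) :=
            mul_le_mul hD hX measureReal_nonneg (by positivity)
        _ = _ := by ring
    · refine MeasurableSet.union (sg_mono Set.subset_union_left _
        (t_sg hG hnb v measurableSet_Ico)) ?_
      refine sg_mono (Set.subset_union_right) _ ?_
      refine @Finset.measurableSet_biUnion _ _ (sg (⋃ w' ∈ W', BB nb v w')) _ W' fun w' h' => ?_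
      refine sg_mono (Set.subset_biUnion_of_mem (u := fun j => BB nb v j) h') _ ?_
      exact MeasurableSet.union ((msg_sg nb a v w').fst measurableSet_Ico)
        ((msg_sg nb b v w').fst measurableSet_Ico)
  · refine (measureReal_biUnion_finset_le _ _).trans ?_
    have key : ∀ c : ZMod 4, (PP V).real ((EV nb k a b v w ∩ {x | (msg nb x a v w).2 = c}) ∩
        ({x | tm (x v) ∈ Set.Ici (k / NN)} ∩
         {x | (usedLt W' (fun w => msg nb x a v w) (k / NN)).card = 2 ∧
           c ∉ usedLt W' (fun w => msg nb x a v w) (k / NN)})) ≤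
         (PP V).real (EV nb k a b v w ∩ {x | (msg nb x a v w).2 = c}) * (4/25) := by
      intro c
      have hU := usedLt_sg hG hnb (v := v) W' a (k / NN) (fun U => U.card = 2 ∧ c ∉ U)
      have hA := t_sg hG hnb v (measurableSet_Ici (a := k / NN))
      have hc : MeasurableSet[sg (BB nb v w)] {x | (msg nb x a v w).2 = c} :=
        (msg_sg nb a v w).snd (MeasurableSet.singleton c)
      rw [indep2 dj1 ((EV_meas nb k a b v w).inter hc)
        (MeasurableSet.inter (sg_mono Set.subset_union_left _ hA)
          (sg_mono Set.subset_union_right _ hU))]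
      rw [indep2 dj2 hA hU, p_eq2 hG hnb hsub hcard a (q := QQ a (1 - k / NN))
        (fun w' h' => msg_law hG hnb hdeg a (hadj w' h') i1 i2)]
      have e : {x : V → ℝ | tm (x v) ∈ Set.Ici (k / NN)} = {x | tm (x v) < k / NN}ᶜ := by
        ext; simp
      have hlt : MeasurableSet {x : V → ℝ | tm (x v) < k / NN} :=
        sg_le _ _ (t_sg hG hnb v measurableSet_Iio)
      rw [e, probReal_compl_eq_one_sub hlt, PP_tm v i1 i2]
      have := QQ_key a (s := 1 - k / NN) (by linarith) (by linarith)
      exact mul_le_mul_of_nonneg_left (by linarith) measureReal_nonneg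
    refine (Finset.sum_le_sum fun c _ => key c).trans ?_
    rw [← Finset.sum_mul, ← real_cut _ (sg_le _ _ (EV_meas nb k a b v w)) _ (msg_m nb a v w).snd]
    have : (PP V).real (EV nb k a b v w ∩ {x | (msg nb x a v w).2 ∈ (Finset.univ : Finset (ZMod 4))})
        ≤ E k := (measureReal_mono Set.inter_subset_left).trans (h1 k le_rfl)
    linarith

open Classical in
lemma step {u v : V} (huv : G.Adj u v) {a b k : ℕ} (hk : k < 4100)
    {E : ℕ → ℝ}
    (h1 : ∀ w, G.Adj v w → ∀ j ≤ k, (PP V).real (EV nb j a b v w) ≤ E j)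
    (h2 : ∀ w, G.Adj v w → ∀ j ≤ k, (PP V).real (EV nb j b a v w) ≤ E j) :
    (PP V).real (EV nb k (a+1) (b+1) u v) ≤ 10 * ∑ j ∈ Finset.range k, E j + 9/10 * E k := by
  have hN : (0:ℝ) < NN := by norm_num
  have hsum : ∑ w ∈ (nb v).erase u,
      (2 * ∑ j ∈ Finset.range k, E j + (82 / NN * E k + 4 / 25 * E k)) =
      10 * ∑ j ∈ Finset.range k, E j + 9/10 * E k := by
    rw [Finset.sum_const, Finset.card_erase_of_mem ((hnb _ _).2 huv.symm), hdeg, nsmul_eq_mul]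
    norm_num
    ring
  rw [← hsum]
  have hbd : ∀ w ∈ (nb v).erase u, _ := fun w hw => step_w hG hnb hdeg huv hw hk
    (h1 w ((hnb _ _).1 (Finset.mem_of_mem_erase hw)))
    (h2 w ((hnb _ _).1 (Finset.mem_of_mem_erase hw)))
  refine le_trans ?_ (Finset.sum_le_sum hbd)
  refine le_trans (measureReal_mono ?_ (measure_ne_top _ _)) (measureReal_biUnion_finset_le _ _)
  rintro x ⟨hD, hτ⟩
  have hd := disc_step (t := tm (x v)) (o := oc (x v)) (W := (nb v).erase u)
    (M := fun w => msg nb x a v w) (M' := fun w => msg nb x b v w) hD hτ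
  simp only [Set.mem_iUnion]
  rcases hd with ⟨w, hw, hne, hlt⟩ | ⟨w, hw, hDw, hx⟩ | ⟨w, hw, hDw, hlt, ht, hc, hn⟩
  · obtain ⟨j, hj, hDj⟩ := exists_disc hN hne (msg_time_mem nb x a v w).1
      (msg_time_mem nb x b v w).1 hlt
    refine ⟨w, hw, Or.inl ?_⟩
    simp only [Set.mem_iUnion]
    exact ⟨j, Finset.mem_range.2 hj, hDj⟩
  · refine ⟨w, hw, Or.inr (Or.inl ⟨hDw, ?_⟩)⟩
    rcases hx with hx | ⟨w', hw', hx⟩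
    · exact Or.inl hx
    · refine Or.inr ?_
      simp only [Set.mem_iUnion]
      exact ⟨w', hw', hx⟩
  · refine ⟨w, hw, Or.inr (Or.inr ?_)⟩
    simp only [Set.mem_iUnion]
    exact ⟨(msg nb x a v w).2, Finset.mem_univ _, ⟨⟨hDw, hlt⟩, rfl⟩, ht, hc, hn⟩

lemma geom_bd (k : ℕ) : 200 * ∑ j ∈ Finset.range k, (201:ℝ)^j ≤ 201^k := by
  induction k with
  | zero => simp
  | succ k ih => rw [Finset.sum_range_succ, pow_succ]; linarith

lemma decay (n : ℕ) {u v : V} (huv : G.Adj u v) {k : ℕ} (hk : k < 4100) :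
    (PP V).real (EV nb k n (n+1) u v) ≤ 201^k * (19/20)^n ∧
    (PP V).real (EV nb k (n+1) n u v) ≤ 201^k * (19/20)^n := by
  induction n generalizing u v k with
  | zero =>
    have : (1:ℝ) ≤ 201^k * (19/20)^0 := by
      rw [pow_zero, mul_one]; exact one_le_pow₀ (by norm_num)
    exact ⟨measureReal_le_one.trans this, measureReal_le_one.trans this⟩
  | succ n ih =>
    have fin : 10 * ∑ j ∈ Finset.range k, ((201:ℝ)^j * (19/20)^n) + 9/10 * (201^k * (19/20)^n) ≤
        201^k * (19/20)^(n+1) := by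
      rw [← Finset.sum_mul]
      have h1 := geom_bd hG hnb hdeg k
      have h2 : (0:ℝ) ≤ (19/20)^n := by positivity
      rw [pow_succ]
      nlinarith [mul_le_mul_of_nonneg_right h1 h2]
    constructor
    · refine (step hG hnb hdeg huv hk (fun w hw j hj => (ih hw (hj.trans_lt hk)).1)
        (fun w hw j hj => (ih hw (hj.trans_lt hk)).2)).trans fin
    · refine (step hG hnb hdeg huv hk (fun w hw j hj => (ih hw (hj.trans_lt hk)).2)
        (fun w hw j hj => (ih hw (hj.trans_lt hk)).1)).trans fin

lemma ne_bd (n : ℕ) {u v : V} (huv : G.Adj u v) :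
    (PP V).real {x | msg nb x n u v ≠ msg nb x (n+1) u v} ≤
      (∑ k ∈ Finset.range 4100, 2 * (201:ℝ)^k) * (19/20)^n := by
  have hsub : {x | msg nb x n u v ≠ msg nb x (n+1) u v} ⊆
      ⋃ k ∈ Finset.range 4100, DD nb k n (n+1) u v := by
    intro x hx
    have hN : (0:ℝ) < NN := by norm_num
    have e : ((4100 : ℕ) : ℝ) / NN = 1 := by norm_num
    obtain ⟨j, hj, hD⟩ := exists_disc hN (k := 4100) hx (msg_time_mem nb x n u v).1
      (msg_time_mem nb x (n+1) u v).1 (Or.inl (by rw [e]; exact (msg_time_mem nb x n u v).2))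
    simp only [Set.mem_iUnion]
    exact ⟨j, Finset.mem_range.2 hj, hD⟩
  refine (measureReal_mono hsub (measure_ne_top _ _)).trans ((measureReal_biUnion_finset_le _ _).trans ?_)
  rw [Finset.sum_mul]
  refine Finset.sum_le_sum fun k hk => ?_
  have := decay hG hnb hdeg n huv (Finset.mem_range.1 hk)
  rw [mul_assoc]
  exact DD_le nb this.1 this.2

lemma ev_const {u v : V} (huv : G.Adj u v) :
    ∀ᵐ x ∂(PP V), ∀ᶠ n in Filter.atTop, msg nb x n u v = msg nb x (n+1) u v := by
  have hs : ∑' n, (PP V) {x | msg nb x n u v ≠ msg nb x (n+1) u v} ≠ ⊤ := by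
    have hsum : Summable fun n : ℕ => (∑ k ∈ Finset.range 4100, 2 * (201:ℝ)^k) * (19/20)^n :=
      (summable_geometric_of_lt_one (by norm_num) (by norm_num)).mul_left _
    refine ne_top_of_le_ne_top hsum.tsum_ofReal_ne_top (ENNReal.tsum_le_tsum fun n => ?_)
    rw [← ofReal_measureReal (measure_ne_top _ _)]
    exact ENNReal.ofReal_le_ofReal (ne_bd hG hnb hdeg n huv)
  filter_upwards [ae_eventually_notMem hs] with x hx
  filter_upwards [hx] with n hn
  by_contra hc
  exact hn hc

end contr
end T6
open MeasureTheory

namespace T6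

lemma ev_const_of_step {α : Type*} {a : ℕ → α} (h : ∀ᶠ n in Filter.atTop, a n = a (n+1)) :
    ∃ c, ∀ᶠ n in Filter.atTop, a n = c := by
  obtain ⟨N, hN⟩ := Filter.eventually_atTop.1 h
  refine ⟨a N, Filter.eventually_atTop.2 ⟨N, fun n hn => ?_⟩⟩
  induction n, hn using Nat.le_induction with
  | base => rfl
  | succ n hn ih => rw [← hN n hn, ih]

def jj (c : ZMod 4) : Fin 5 := if c = 1 then 1 else if c = 2 then 2 else if c = 3 then 3 else 0

lemma jj_inj : ∀ c d : ZMod 4, jj c = jj d → c = d := by decide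

section final
variable {V : Type} (nb : V → Finset V)

def AA (c : ZMod 4) (v : V) : Set (V → ℝ) := {x | ∀ᶠ n in Filter.atTop, FF nb x n v = c}

lemma FF_meas (n : ℕ) (v : V) : Measurable (fun x => FF nb x n v) :=
  (meas_phi (tm_meas.comp (measurable_pi_apply v)) (oc_meas.comp (measurable_pi_apply v))
    (fun w _ => msg_m nb n v w)).snd

lemma AA_meas (c : ZMod 4) (v : V) : MeasurableSet (AA nb c v) := by
  have : AA nb c v = ⋃ N : ℕ, ⋂ n : ℕ, ⋂ _ : N ≤ n, {x | FF nb x n v = c} := by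
    ext x
    simp [AA, Filter.eventually_atTop]
  rw [this]
  exact MeasurableSet.iUnion fun N => MeasurableSet.iInter fun n => MeasurableSet.iInter fun _ =>
    FF_meas nb n v (MeasurableSet.singleton c)

open Classical in
noncomputable def ff (x : V → ℝ) (v : V) : Fin 5 :=
  if x ∈ AA nb 1 v then 1 else if x ∈ AA nb 2 v then 2 else if x ∈ AA nb 3 v then 3 else 0

lemma ff_ne (x : V → ℝ) (v : V) : ff nb x v ≠ 4 := by
  unfold ff
  split_ifs <;> decide

lemma ff_meas : Measurable (ff nb) := by
  refine measurable_pi_lambda _ fun v => ?_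
  unfold ff
  exact Measurable.ite (AA_meas nb 1 v) measurable_const
    (Measurable.ite (AA_meas nb 2 v) measurable_const
      (Measurable.ite (AA_meas nb 3 v) measurable_const measurable_const))

lemma ff_eq {x : V → ℝ} {v : V} {c : ZMod 4} (h : x ∈ AA nb c v) : ff nb x v = jj c := by
  have key : ∀ d, x ∈ AA nb d v ↔ c = d := by
    intro d
    constructor
    · intro hd
      obtain ⟨n, h1, h2⟩ := (Filter.Eventually.and h hd).exists
      exact h1.symm.trans h2
    · rintro rfl; exact h
  simp [ff, key, jj]

variable {nb} {G : SimpleGraph V} (hG : G.IsAcyclic) (hnb : ∀ v w, w ∈ nb v ↔ G.Adj v w)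

include hnb in
lemma ff_equiv (φ : G ≃g G) (x : V → ℝ) (v : V) :
    ff nb (fun u => x (φ.symm u)) v = ff nb x (φ.symm v) := by
  have key : ∀ c, (fun u => x (φ.symm u)) ∈ AA nb c v ↔ x ∈ AA nb c (φ.symm v) := by
    intro c
    change (∀ᶠ n in Filter.atTop, FF nb (fun u => x (φ.symm u)) n v = c) ↔
      ∀ᶠ n in Filter.atTop, FF nb x n (φ.symm v) = c
    simp only [FF_equiv hnb]
  have k1 := key 1
  have k2 := key 2
  have k3 := key 3
  by_cases h1 : x ∈ AA nb 1 (φ.symm v) <;> by_cases h2 : x ∈ AA nb 2 (φ.symm v) <;>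
    by_cases h3 : x ∈ AA nb 3 (φ.symm v) <;> unfold ff <;>
    simp only [h1, h2, h3, iff_true, iff_false] at k1 k2 k3 <;>
    simp only [h1, h2, h3, k1, k2, k3, if_true, if_false]

include hG hnb

open Classical in
lemma core {x : V → ℝ} (hx : ∀ u v : V, tm (x u) = tm (x v) → u = v) {u v : V} (huv : G.Adj u v)
    {n : ℕ} (h1 : msg nb x n u v = msg nb x (n+1) u v) (h2 : msg nb x n v u = msg nb x (n+1) v u)
    (hlt : (msg nb x n u v).1 < (msg nb x n v u).1) : FF nb x n u ≠ FF nb x n v := by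
  have hv : FF nb x n v = (msg nb x n u v).2 := by
    have := phi_erase (t := tm (x v)) (o := oc (x v)) (W := nb v) (M := fun w => msg nb x n v w)
      (u := u) (by
        have e : phiT (tm (x v)) ((nb v).erase u) (fun w => msg nb x n v w) =
          (msg nb x (n+1) u v).1 := rfl
        rw [e, ← h1]; exact hlt)
    rw [FF, this, h1]
    rfl
  rw [hv]
  refine phi_ne (u := v) (W := nb u) (M := fun w => msg nb x n u w) ((hnb _ _).2 huv) ?_ ?_
  · have e : phiT (tm (x u)) ((nb u).erase v) (fun w => msg nb x n u w) =
      (msg nb x (n+1) v u).1 := rfl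
    rw [e, ← h2]; exact hlt
  · intro a ha b hb hab
    obtain ⟨y, hy, e1⟩ := msg_time nb x n u a
    obtain ⟨z, hz, e2⟩ := msg_time nb x n u b
    by_contra hne
    have := hx y z (by rw [← e1, ← e2]; exact hab)
    subst this
    exact Set.disjoint_left.1 (Br_disj hG hnb ((hnb _ _).1 ha) ((hnb _ _).1 hb) hne) hy hz

lemma core2 {x : V → ℝ} (hx : ∀ u v : V, tm (x u) = tm (x v) → u = v) {u v : V} (huv : G.Adj u v)
    {n : ℕ} (h1 : msg nb x n u v = msg nb x (n+1) u v) (h2 : msg nb x n v u = msg nb x (n+1) v u) :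
    FF nb x n u ≠ FF nb x n v := by
  rcases lt_trichotomy (msg nb x n u v).1 (msg nb x n v u).1 with h | h | h
  · exact core hG hnb hx huv h1 h2 h
  · exfalso
    obtain ⟨y, hy, e1⟩ := msg_time nb x n u v
    obtain ⟨z, hz, e2⟩ := msg_time nb x n v u
    have := hx y z (by rw [← e1, ← e2]; exact h)
    subst this
    exact Set.disjoint_left.1 (Br_disj' hG hnb huv) hy hz
  · exact (core hG hnb hx huv.symm h2 h1 h).symm

theorem ff_proper [Countable V] (hdeg : ∀ v, (nb v).card = 6) :
    ∀ᵐ x ∂(PP V), ∀ u v : V, G.Adj u v → ff nb x u ≠ ff nb x v := by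
  have hall : ∀ᵐ x ∂(PP V), ∀ u v : V, G.Adj u v →
      ∀ᶠ n in Filter.atTop, msg nb x n u v = msg nb x (n+1) u v := by
    rw [ae_all_iff]; intro u
    rw [ae_all_iff]; intro v
    by_cases huv : G.Adj u v
    · simpa [huv] using ev_const hG hnb hdeg huv
    · simp [huv]
  filter_upwards [hall, PP_inj (V := V)] with x hx hinj
  have hF : ∀ v, ∃ c, ∀ᶠ n in Filter.atTop, FF nb x n v = c := by
    intro v
    apply ev_const_of_step
    have : ∀ᶠ n in Filter.atTop, ∀ w ∈ nb v, msg nb x n v w = msg nb x (n+1) v w := by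
      rw [Filter.eventually_all_finset]
      exact fun w hw => hx v w ((hnb _ _).1 hw)
    filter_upwards [this] with n hn
    rw [FF, FF, phi_congr hn]
  intro u v huv heq
  obtain ⟨c, hc⟩ := hF u
  obtain ⟨d, hd⟩ := hF v
  rw [ff_eq nb hc, ff_eq nb hd] at heq
  have hcd := jj_inj c d heq
  obtain ⟨n, ⟨h1, h2⟩, h3, h4⟩ :=
    ((hc.and hd).and ((hx u v huv).and (hx v u huv.symm))).exists
  exact core2 hG hnb hinj huv h3 h4 (by rw [h1, h2, hcd])

end final
end T6
open MeasureTheory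

/-- For every ε > 0, the 6-regular tree admits an fiid labelling with 5 labels which is
a.e. proper (everywhere) and assigns the label 4 to a given vertex with probability less than ε. -/
theorem fiid_approximate_five_coloring_of_T6
    (V : Type) [Countable V] [Infinite V]
    (G : SimpleGraph V) (hconn : G.Connected) (hacyc : G.IsAcyclic)
    (hreg : ∀ v : V, (G.neighborSet v).ncard = 6)
    (μ : Measure (V → ℝ)) [IsProbabilityMeasure μ]
    (hμ : ∀ s : Finset V,
      Measure.map (fun (x : V → ℝ) (v : s) => x v) μ
        = Measure.pi (fun _ : s => volume.restrict (Set.Icc (0:ℝ) 1)))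
    (ε : ℝ) (hε : 0 < ε) :
    ∃ f : (V → ℝ) → (V → Fin 5),
      Measurable f ∧
      (∀ (φ : G ≃g G) (x : V → ℝ) (v : V),
        f (fun u => x (φ.symm u)) v = f x (φ.symm v)) ∧
      (∀ᵐ x ∂μ, ∀ u v : V, G.Adj u v → f x u ≠ f x v) ∧
      (∀ v : V, μ {x | f x v = 4} < ENNReal.ofReal ε) := by
  have hfin : ∀ v, (G.neighborSet v).Finite := fun v =>
    Set.finite_of_ncard_ne_zero (by rw [hreg v]; norm_num)
  have hnb : ∀ v w, w ∈ (hfin v).toFinset ↔ G.Adj v w := by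
    intro v w; simp
  have hdeg : ∀ v, ((hfin v).toFinset).card = 6 := by
    intro v
    rw [← Set.ncard_eq_toFinset_card _ (hfin v), hreg]
  refine ⟨T6.ff (fun v => (hfin v).toFinset), T6.ff_meas _, fun φ x v => T6.ff_equiv hnb φ x v,
    ?_, fun v => ?_⟩
  · rw [T6.eq_PP μ hμ]
    exact T6.ff_proper hacyc hnb hdeg
  · simp [T6.ff_ne, hε]
end
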